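/- Let Ω = (0,1)×(−1,1). Then the set A = {u ∈ BV(Ω;ℝ²) : u(x) = R(x₂)x + ψ(x₂) a.e. with R ∈ BV(−1,1;SO(2)), ψ ∈ BV(−1,1;ℝ²), det ∇u = 1 a.e.} admits the following two representations: (1) A = {u ∈ BV(Ω;ℝ²) : ∇u(x) = R(x₂)(I + γ(x₂) e₁⊗e₂) for a.e. x ∈ Ω, with R ∈ BV(−1,1;SO(2)), γ ∈ L¹(−1,1), and (D^s u)e₁ = 0}; (2) A = {u ∈ BV(Ω;ℝ²) : u(x) = R(x₂)x + ψ(x₂) a.e. with R ∈ BV(−1,1;SO(2)) and ψ ∈ BV(−1,1;ℝ²) such that ψ'·Re₂ = 0 and R' = 0 a.e. in (−1,1)}. -/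

import Mathlib

open MeasureTheory Set Filter Topology
open scoped ENNReal

noncomputable section

/-- We identify `ℝ²` with maps `Fin 2 → ℝ`; `x 0` is the `x₁` coordinate and
`x 1` the `x₂` coordinate. -/
abbrev V2 := Fin 2 → ℝ

/-- `2 × 2` real matrices. -/
abbrev Mat2 := Matrix (Fin 2) (Fin 2) ℝ

/-- Proper rotations: `SO(2) = {R : R Rᵀ = 1, det R = 1}`. -/
def SO2 : Set Mat2 := {R | R * R.transpose = 1 ∧ R.det = 1}

def e1 : V2 := ![1, 0]
def e2 : V2 := ![0, 1]

/-- Euclidean norm on `ℝ²`. -/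
def vnorm (v : V2) : ℝ := Real.sqrt (v 0 ^ 2 + v 1 ^ 2)

/-- Frobenius norm on `2 × 2` matrices. -/
def mnorm (M : Mat2) : ℝ := Real.sqrt (∑ i, ∑ j, M i j ^ 2)

/-- Euclidean inner product on `ℝ²`. -/
def dot (v w : V2) : ℝ := ∑ i, v i * w i

/-- Tensor (outer) product `a ⊗ b = a bᵀ` of two vectors. -/
def outer (a b : V2) : Mat2 := Matrix.of fun i j => a i * b j

/-- Identification of `ℝ²` with the Euclidean space `EuclideanSpace ℝ (Fin 2)`. -/
def vToE (v : V2) : EuclideanSpace ℝ (Fin 2) := (EuclideanSpace.equiv (Fin 2) ℝ).symm v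

/-- Identification of `2×2` matrices with `EuclideanSpace ℝ (Fin 2 × Fin 2)`
(so that the induced norm is the Frobenius norm). -/
def mToE (M : Mat2) : EuclideanSpace ℝ (Fin 2 × Fin 2) :=
  (EuclideanSpace.equiv (Fin 2 × Fin 2) ℝ).symm fun p => M p.1 p.2

/-- A vector-valued function of one real variable has bounded variation on `s`
(with respect to the Euclidean norm). -/
def BVv (ψ : ℝ → V2) (s : Set ℝ) : Prop := BoundedVariationOn (fun t => vToE (ψ t)) s

/-- A matrix-valued function of one real variable has bounded variation on `s`
(with respect to the Frobenius norm). -/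
def BVm (R : ℝ → Mat2) (s : Set ℝ) : Prop := BoundedVariationOn (fun t => mToE (R t)) s

/-- Componentwise (a.e. pointwise) derivative of a vector-valued function of one variable.
For a one-dimensional `BV` function, the classical derivative exists a.e. and coincides with
the density of the absolutely continuous part of its distributional derivative
(the approximate derivative). -/
def vecDeriv (ψ : ℝ → V2) (t : ℝ) : V2 := fun i => deriv (fun s => ψ s i) t

/-- Componentwise derivative of a matrix-valued function of one variable. -/
def mDeriv (R : ℝ → Mat2) (t : ℝ) : Mat2 := Matrix.of fun i j => deriv (fun s => R s i j) t

/-- The rigid layers `ε Y_rig = {x : Int.fract (x₂/ε) ∈ [λ, 1)}` (1-periodic extension of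
`[0,1) × [λ,1)`, scaled by `ε`). -/
def rigid2 (lam ε : ℝ) : Set V2 := {x | lam ≤ Int.fract (x 1 / ε)}

/-- The one-dimensional rigid layers `ε I_rig`, where `I_rig` is the 1-periodic extension
of `[λ, 1)`. -/
def rigid1 (lam ε : ℝ) : Set ℝ := {t | lam ≤ Int.fract (t / ε)}

/-- `a_Ω = inf_{x ∈ Ω} x₂`. -/
def aOm (Ω : Set V2) : ℝ := sInf ((fun x : V2 => x 1) '' Ω)

/-- `b_Ω = sup_{x ∈ Ω} x₂`. -/
def bOm (Ω : Set V2) : ℝ := sSup ((fun x : V2 => x 1) '' Ω)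

/-- `Ω` is `x₁`-connected: every horizontal slice is a (possibly empty) interval. -/
def X1Connected (Ω : Set V2) : Prop := ∀ t : ℝ, OrdConnected {s : ℝ | ![s, t] ∈ Ω}

/-- A (nonempty) bounded Lipschitz domain: near every boundary point, after a rotation,
`Ω` is the region above the graph of a Lipschitz function. -/
def IsLipschitzDomain (Ω : Set V2) : Prop :=
  IsOpen Ω ∧ Ω.Nonempty ∧ Bornology.IsBounded Ω ∧
    ∀ x ∈ frontier Ω, ∃ Q ∈ SO2, ∃ L : NNReal, ∃ f : ℝ → ℝ, ∃ r : ℝ, 0 < r ∧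
      LipschitzWith L f ∧ ∀ y ∈ Metric.ball x r, (y ∈ Ω ↔ f (Q.mulVec y 0) < Q.mulVec y 1)

/-- Partial derivative `∂_j φ` of a scalar test function. -/
def pd (j : Fin 2) (φ : V2 → ℝ) (x : V2) : ℝ := fderiv ℝ φ x (Pi.single j 1)

/-- Componentwise integrability of a matrix-valued map. -/
def IntegrableOnM (g : V2 → Mat2) (Ω : Set V2) : Prop :=
  ∀ i j, IntegrableOn (fun x => g x i j) Ω volume

/-- `u ∈ W^{1,1}(Ω;ℝ²)` with weak gradient `gu`, expressed through integration by parts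
against smooth compactly supported test functions. -/
structure IsSobolev11On (Ω : Set V2) (u : V2 → V2) (gu : V2 → Mat2) : Prop where
  int_u : IntegrableOn u Ω volume
  int_gu : IntegrableOnM gu Ω
  ibp : ∀ φ : V2 → ℝ, ContDiff ℝ (⊤ : ℕ∞) φ → HasCompactSupport φ → tsupport φ ⊆ Ω →
    ∀ i j, ∫ x in Ω, u x i * pd j φ x = - ∫ x in Ω, φ x * gu x i j

/-- `u ∈ BV(Ω;ℝ²)`, with distributional derivative `Du = gu · L² + gs · σ`.
Here `gu` is the approximate differential (density of the absolutely continuous part),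
`σ = |D^s u|` is the total variation measure of the singular part (a finite measure,
concentrated on `Ω` and singular with respect to Lebesgue measure), and `gs` is the
polar density of the singular part, of unit Frobenius norm `σ`-a.e. -/
structure HasBVDerivOn (Ω : Set V2) (u : V2 → V2) (gu : V2 → Mat2)
    (σ : Measure V2) (gs : V2 → Mat2) : Prop where
  int_u : IntegrableOn u Ω volume
  int_gu : IntegrableOnM gu Ω
  fin : σ Set.univ ≠ ⊤
  conc : σ Ωᶜ = 0
  perp : σ ⟂ₘ (volume : Measure V2)
  meas_gs : ∀ i j, AEMeasurable (fun x => gs x i j) σ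
  unit : ∀ᵐ x ∂σ, mnorm (gs x) = 1
  ibp : ∀ φ : V2 → ℝ, ContDiff ℝ (⊤ : ℕ∞) φ → HasCompactSupport φ → tsupport φ ⊆ Ω →
    ∀ i j, ∫ x in Ω, u x i * pd j φ x
        = (- ∫ x in Ω, φ x * gu x i j) - ∫ x, φ x * gs x i j ∂σ

/-- `L¹(Ω;ℝ²)` convergence of a sequence. -/
def L1ConvOn (Ω : Set V2) (un : ℕ → V2 → V2) (u : V2 → V2) : Prop :=
  Tendsto (fun n => ∫ x in Ω, vnorm (un n x - u x)) atTop (𝓝 0)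

/-- Weak* convergence of the measures `gn n · L²∟Ω` to `gu · L²∟Ω + gs · σ`
in `M(Ω; ℝ^{2×2})`, tested against continuous functions compactly supported in `Ω`. -/
def MeasConv (Ω : Set V2) (gn : ℕ → V2 → Mat2) (gu : V2 → Mat2)
    (σ : Measure V2) (gs : V2 → Mat2) : Prop :=
  ∀ φ : V2 → ℝ, Continuous φ → HasCompactSupport φ → tsupport φ ⊆ Ω → ∀ i j,
    Tendsto (fun n => ∫ x in Ω, φ x * gn n x i j) atTop
      (𝓝 ((∫ x in Ω, φ x * gu x i j) + ∫ x, φ x * gs x i j ∂σ))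

/-- Weak* convergence in `BV(Ω;ℝ²)` of a sequence of `W^{1,1}` maps to a `BV` limit:
`L¹` convergence together with weak* convergence of the derivative measures. -/
def WeakStarToBV (Ω : Set V2) (un : ℕ → V2 → V2) (u : V2 → V2) : Prop :=
  ∃ gu σ gs, HasBVDerivOn Ω u gu σ gs ∧ L1ConvOn Ω un u ∧
    ∀ gn : ℕ → V2 → Mat2, (∀ n, IsSobolev11On Ω (un n) (gn n)) → MeasConv Ω gn gu σ gs

/-- `u ∈ A_ε`, witnessed by the data `R ∈ L^∞(Ω;SO(2))` and `γ ∈ L¹(Ω)`: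
`u ∈ W^{1,1}(Ω;ℝ²)` with `∇u = R (I + γ e₁⊗e₂)` a.e. and `γ = 0` a.e. on `εY_rig ∩ Ω`. -/
structure MemAeps (Ω : Set V2) (lam ε : ℝ) (u : V2 → V2)
    (R : V2 → Mat2) (γ : V2 → ℝ) : Prop where
  so2 : ∀ᵐ x ∂(volume.restrict Ω), R x ∈ SO2
  int_γ : IntegrableOn γ Ω volume
  sob : IsSobolev11On Ω u fun x => R x * (1 + γ x • outer e1 e2)
  rig : ∀ᵐ x ∂(volume.restrict (Ω ∩ rigid2 lam ε)), γ x = 0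

/-- The elastoplastic energy `E_ε(u) = ∫_Ω |γ| dx` for `u ∈ A_ε`, `∞` otherwise,
as an `ℝ≥0∞`-valued functional (the decomposition data is essentially unique). -/
def Eeps (Ω : Set V2) (lam ε : ℝ) (u : V2 → V2) : ℝ≥0∞ :=
  sInf {c | ∃ R γ, MemAeps Ω lam ε u R γ ∧ c = ∫⁻ x in Ω, ENNReal.ofReal |γ x|}

/-- `u ∈ A` relative to the vertical interval `(a, b)`:
`u ∈ BV(Ω;ℝ²)` with `u(x) = R(x₂)x + ψ(x₂)` a.e., `R ∈ BV(a,b;SO(2))`,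
`ψ ∈ BV(a,b;ℝ²)` and `det ∇u = 1` a.e. in `Ω`. -/
def memAOn (Ω : Set V2) (a b : ℝ) (u : V2 → V2) : Prop :=
  ∃ gu σ gs, HasBVDerivOn Ω u gu σ gs ∧
    (∃ R : ℝ → Mat2, ∃ ψ : ℝ → V2, (∀ t ∈ Ioo a b, R t ∈ SO2) ∧
      BVm R (Ioo a b) ∧ BVv ψ (Ioo a b) ∧
      ∀ᵐ x ∂(volume.restrict Ω), u x = (R (x 1)).mulVec x + ψ (x 1)) ∧
    ∀ᵐ x ∂(volume.restrict Ω), (gu x).det = 1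

/-- `u ∈ A`. -/
def memA (Ω : Set V2) (u : V2 → V2) : Prop := memAOn Ω (aOm Ω) (bOm Ω) u

/-- `u ∈ A∥` relative to the vertical interval `(a,b)`:
`u(x) = Rx + ϑ(x₂) R e₁ + c` a.e. with a constant rotation `R ∈ SO(2)`,
`ϑ ∈ BV(a,b)` and `c ∈ ℝ²`. -/
def memAparOn (Ω : Set V2) (a b : ℝ) (u : V2 → V2) : Prop :=
  ∃ R ∈ SO2, ∃ ϑ : ℝ → ℝ, ∃ c : V2, BoundedVariationOn ϑ (Ioo a b) ∧
    ∀ᵐ x ∂(volume.restrict Ω), u x = R.mulVec x + ϑ (x 1) • R.mulVec e1 + c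

/-- `u ∈ A∥`. -/
def memApar (Ω : Set V2) (u : V2 → V2) : Prop := memAparOn Ω (aOm Ω) (bOm Ω) u

/-- The limit energy `E(u) = ∫_Ω |ψ'·Re₁| dx + |D^s u|(Ω)` for `u ∈ A`, `∞` otherwise. -/
def Efun (Ω : Set V2) (u : V2 → V2) : ℝ≥0∞ :=
  sInf {c | ∃ gu σ gs, HasBVDerivOn Ω u gu σ gs ∧
    ∃ R : ℝ → Mat2, ∃ ψ : ℝ → V2,
      (∀ t ∈ Ioo (aOm Ω) (bOm Ω), R t ∈ SO2) ∧ BVm R (Ioo (aOm Ω) (bOm Ω)) ∧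
      BVv ψ (Ioo (aOm Ω) (bOm Ω)) ∧
      (∀ᵐ x ∂(volume.restrict Ω), u x = (R (x 1)).mulVec x + ψ (x 1)) ∧
      (∀ᵐ x ∂(volume.restrict Ω), (gu x).det = 1) ∧
      c = (∫⁻ x in Ω, ENNReal.ofReal |dot (vecDeriv ψ (x 1)) ((R (x 1)).mulVec e1)|)
          + σ Set.univ}

/-- The limit energy on `A∥`: `E(u) = ∫_Ω |ϑ'(x₂)| dx + |D^s u|(Ω)` for `u ∈ A∥`,
`∞` otherwise. -/
def EparFun (Ω : Set V2) (u : V2 → V2) : ℝ≥0∞ :=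
  sInf {c | ∃ gu σ gs, HasBVDerivOn Ω u gu σ gs ∧
    ∃ R ∈ SO2, ∃ ϑ : ℝ → ℝ, ∃ c0 : V2, BoundedVariationOn ϑ (Ioo (aOm Ω) (bOm Ω)) ∧
      (∀ᵐ x ∂(volume.restrict Ω), u x = R.mulVec x + ϑ (x 1) • R.mulVec e1 + c0) ∧
      c = (∫⁻ x in Ω, ENNReal.ofReal |deriv ϑ (x 1)|) + σ Set.univ}

/-- The regularized limit energy `E^δ(u) = ∫_Ω |ϑ'| dx + |D^s u|(Ω) + δ|Ω|` on `A∥`,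
`∞` otherwise. -/
def EDelta (Ω : Set V2) (δ : ℝ) (u : V2 → V2) : ℝ≥0∞ :=
  EparFun Ω u + ENNReal.ofReal δ * volume Ω

/-- `‖v‖_{W^{1,p}(Ω;ℝ²)}^p = ∫_Ω |v|^p + ∫_Ω |Dv|^p` for a map `v` with weak Jacobian `G`. -/
def Wp1 (p : ℝ) (Ω : Set V2) (v : V2 → V2) (G : V2 → Mat2) : ℝ≥0∞ :=
  (∫⁻ x in Ω, ENNReal.ofReal (vnorm (v x) ^ p)) + ∫⁻ x in Ω, ENNReal.ofReal (mnorm (G x) ^ p)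

/-- The regularized energy
`E^δ_ε(u) = ∫_Ω |γ| dx + δ ‖∂₁ u‖_{W^{1,p}(Ω;ℝ²)}^p` for `u ∈ A_ε` with
`∂₁u = R e₁ ∈ W^{1,p}(Ω;ℝ²)`, and `∞` otherwise. -/
def EepsDelta (Ω : Set V2) (lam ε δ p : ℝ) (u : V2 → V2) : ℝ≥0∞ :=
  sInf {c | ∃ R γ, MemAeps Ω lam ε u R γ ∧
    ∃ G : V2 → Mat2, IsSobolev11On Ω (fun x => (R x).mulVec e1) G ∧
      c = (∫⁻ x in Ω, ENNReal.ofReal |γ x|) +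
          ENNReal.ofReal δ * Wp1 p Ω (fun x => (R x).mulVec e1) G}

/-- `x` is an approximate jump point of `u`, with one-sided approximate limits `a ≠ b`
relative to a unit normal `ν`. -/
def JumpPt (u : V2 → V2) (x : V2) : Prop :=
  ∃ a b ν : V2, a ≠ b ∧ vnorm ν = 1 ∧
    Tendsto (fun r : ℝ =>
        (∫⁻ z in {z | z ∈ Metric.ball x r ∧ 0 < dot (z - x) ν},
            ENNReal.ofReal (vnorm (u z - a))) / volume (Metric.ball x r))
      (𝓝[>] 0) (𝓝 0) ∧
    Tendsto (fun r : ℝ =>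
        (∫⁻ z in {z | z ∈ Metric.ball x r ∧ dot (z - x) ν < 0},
            ENNReal.ofReal (vnorm (u z - b))) / volume (Metric.ball x r))
      (𝓝[>] 0) (𝓝 0)

/-- The jump set `J_u` of `u` in `Ω`. -/
def jumpSet (Ω : Set V2) (u : V2 → V2) : Set V2 := {x ∈ Ω | JumpPt u x}

/-- `u ∈ SBV_∞(Ω;ℝ²)`: `u ∈ BV` with singular part concentrated on the jump set
(no Cantor part), `∇u ∈ L^∞(Ω;ℝ^{2×2})` and `H¹(J_u) < ∞`. -/
def memSBVinf (Ω : Set V2) (u : V2 → V2) : Prop :=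
  ∃ gu σ gs, HasBVDerivOn Ω u gu σ gs ∧
    σ {x | ¬ JumpPt u x} = 0 ∧
    (∃ M : ℝ, ∀ᵐ x ∂(volume.restrict Ω), mnorm (gu x) ≤ M) ∧
    Measure.hausdorffMeasure (1 : ℝ) (jumpSet Ω u) ≠ ⊤

/-- Piecewise constant functions on `(a,b)` with finitely many jumps
(the class `PC(a,b)`). -/
def PCOn {α : Type*} (a b : ℝ) (f : ℝ → α) : Prop :=
  ∃ S : Finset ℝ, ∀ s₁ ∈ Ioo a b, ∀ s₂ ∈ Ioo a b, s₁ ≤ s₂ →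
    (∀ r ∈ S, r ∉ Icc s₁ s₂) → f s₁ = f s₂

/-- Piecewise Lipschitz functions on `(a,b)` with finitely many jump points:
the class `SBV_∞(a,b;ℝ²)` of one-dimensional special functions of bounded variation
with bounded derivative and finitely many jumps. -/
def PLipOn (a b : ℝ) (f : ℝ → V2) : Prop :=
  ∃ S : Finset ℝ, ∃ L : ℝ, 0 ≤ L ∧ ∀ s₁ ∈ Ioo a b, ∀ s₂ ∈ Ioo a b, s₁ ≤ s₂ →
    (∀ r ∈ S, r ∉ Icc s₁ s₂) → vnorm (f s₂ - f s₁) ≤ L * (s₂ - s₁)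

/-- The rectangle `Ω = (0,1) × (−1,1)`. -/
def Rect : Set V2 := {x | x 0 ∈ Ioo (0:ℝ) 1 ∧ x 1 ∈ Ioo (-1:ℝ) 1}

/-- `f ∈ W^{1,1}(a,b)`: `f` has an integrable weak derivative on `(a,b)`
(absolutely continuous representative). -/
def IsW11On (f : ℝ → ℝ) (a b : ℝ) : Prop :=
  ∃ g : ℝ → ℝ, IntegrableOn g (Ioo a b) volume ∧
    ∀ s ∈ Ioo a b, ∀ t ∈ Ioo a b, f t - f s = ∫ r in s..t, g r

/-- Smooth test functions compactly supported in `Ω`. -/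
def TestF (Ω : Set V2) (φ : V2 → ℝ) : Prop :=
  ContDiff ℝ (⊤ : ℕ∞) φ ∧ HasCompactSupport φ ∧ tsupport φ ⊆ Ω

/-- Functionals given by finite signed measures singular to Lebesgue measure. -/
def SingF (T : (V2 → ℝ) → ℝ) : Prop :=
  ∃ ν : Measure V2, IsFiniteMeasure ν ∧ ν ⟂ₘ (volume : Measure V2) ∧ ∃ h : V2 → ℝ,
    Integrable h ν ∧ ∀ φ : V2 → ℝ, Continuous φ → HasCompactSupport φ → T φ = ∫ x, φ x * h x ∂ν

lemma integrable_mul_test {μ : Measure V2} {φ h : V2 → ℝ} (hc : Continuous φ)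
    (hs : HasCompactSupport φ) (hh : Integrable h μ) : Integrable (fun x => φ x * h x) μ := by
  obtain ⟨C, hC⟩ := hs.exists_bound_of_continuous hc
  exact hh.bdd_mul hc.aestronglyMeasurable (Eventually.of_forall hC)

lemma SingF.neg {T : (V2 → ℝ) → ℝ} (hT : SingF T) : SingF (fun φ => - T φ) := by
  obtain ⟨ν, h1, h2, h, hh, H⟩ := hT
  refine ⟨ν, h1, h2, -h, hh.neg, fun φ hc hs => ?_⟩
  show - T φ = _
  rw [H φ hc hs, ← integral_neg]
  simp

lemma SingF.add {T S : (V2 → ℝ) → ℝ} (hT : SingF T) (hS : SingF S) :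
    SingF (fun φ => T φ + S φ) := by
  obtain ⟨ν, h1, h2, h, hh, H⟩ := hT
  obtain ⟨ν', h1', h2', h', hh', H'⟩ := hS
  have a1 : ν ≪ ν + ν' := Measure.AbsolutelyContinuous.add_right Measure.AbsolutelyContinuous.rfl _
  have a2 : ν' ≪ ν + ν' := by
    rw [add_comm]; exact Measure.AbsolutelyContinuous.add_right Measure.AbsolutelyContinuous.rfl _
  have : IsFiniteMeasure (ν + ν') := inferInstance
  have : SigmaFinite (ν + ν') := inferInstance
  have : ν.HaveLebesgueDecomposition (ν + ν') := Measure.haveLebesgueDecomposition_of_sigmaFinite _ _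
  have : ν'.HaveLebesgueDecomposition (ν + ν') := Measure.haveLebesgueDecomposition_of_sigmaFinite _ _
  have i1 := (integrable_rnDeriv_smul_iff a1 (f := h)).2 hh
  have i2 := (integrable_rnDeriv_smul_iff a2 (f := h')).2 hh'
  refine ⟨ν + ν', inferInstance, Measure.MutuallySingular.add_left h2 h2',
    fun x => (ν.rnDeriv (ν+ν') x).toReal • h x + (ν'.rnDeriv (ν+ν') x).toReal • h' x,
    i1.add i2, fun φ hc hs => ?_⟩
  show T φ + S φ = _
  rw [H φ hc hs, H' φ hc hs, ← integral_rnDeriv_smul a1, ← integral_rnDeriv_smul a2,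
    ← integral_add]
  · congr 1; ext x; simp only [smul_eq_mul]; ring
  · exact (integrable_rnDeriv_smul_iff a1).2 (integrable_mul_test hc hs hh)
  · exact (integrable_rnDeriv_smul_iff a2).2 (integrable_mul_test hc hs hh')

lemma lemU {Ω : Set V2} (hΩ : IsOpen Ω) {g h : V2 → ℝ} {ν : Measure V2} [IsFiniteMeasure ν]
    (hp : ν ⟂ₘ (volume : Measure V2)) (hg : IntegrableOn g Ω) (hh : Integrable h ν)
    (H : ∀ φ, TestF Ω φ → (∫ x in Ω, φ x * g x) + ∫ x, φ x * h x ∂ν = 0) :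
    (∀ᵐ x ∂(volume.restrict Ω), g x = 0) ∧ (∀ᵐ x ∂ν, x ∈ Ω → h x = 0) := by
  classical
  obtain ⟨s, hs, h1, h2⟩ := hp
  have e1 : s.piecewise g h =ᵐ[volume.restrict Ω] g := by
    apply ae_restrict_of_ae
    have : ∀ᵐ x : V2, x ∈ s := by rw [ae_iff]; exact h2
    filter_upwards [this] with x hx
    simp [hx]
  have e2 : s.piecewise g h =ᵐ[ν] h := by
    have : ∀ᵐ x ∂ν, x ∉ s := by rw [ae_iff]; simpa using h1
    filter_upwards [this] with x hx
    simp [hx]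
  have k1 : Integrable (s.piecewise g h) (volume.restrict Ω) := hg.congr e1.symm
  have k2 : Integrable (s.piecewise g h) ν := hh.congr e2.symm
  have key := hΩ.ae_eq_zero_of_integral_contDiff_smul_eq_zero (μ := volume.restrict Ω + ν)
    (f := s.piecewise g h) ((k1.add_measure k2).locallyIntegrable.locallyIntegrableOn _) (by
      intro φ p1 p2 p3
      simp only [smul_eq_mul]
      rw [integral_add_measure (integrable_mul_test p1.continuous p2 k1)
        (integrable_mul_test p1.continuous p2 k2), ← H φ ⟨p1, p2, p3⟩]
      congr 1
      · apply integral_congr_ae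
        filter_upwards [e1] with x hx
        rw [hx]
      · apply integral_congr_ae
        filter_upwards [e2] with x hx
        rw [hx])
  rw [ae_add_measure_iff] at key
  constructor
  · filter_upwards [key.1, e1, ae_restrict_mem hΩ.measurableSet] with x a b c
    rw [← b, a c]
  · filter_upwards [key.2, e2] with x a b c
    rw [← b, a c]

lemma lemU' {Ω : Set V2} (hΩ : IsOpen Ω) {g : V2 → ℝ} {T : (V2 → ℝ) → ℝ} (hT : SingF T)
    (hg : IntegrableOn g Ω)
    (H : ∀ φ, TestF Ω φ → (∫ x in Ω, φ x * g x) + T φ = 0) :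
    (∀ᵐ x ∂(volume.restrict Ω), g x = 0) := by
  obtain ⟨ν, h1, h2, h, hh, H'⟩ := hT
  refine (lemU hΩ h2 hg hh (fun φ hφ => ?_)).1
  rw [← H' φ hφ.1.continuous hφ.2.1, H φ hφ]

/-- Integration by parts for distribution functions. -/
lemma ibp_cdf {α : Type*} [MeasurableSpace α] (τ : Measure α) [IsFiniteMeasure τ] {p : α → ℝ}
    (hp : Measurable p) {h : α → ℝ} (hh : Integrable h τ) {η : ℝ → ℝ} (h1 : ContDiff ℝ 1 η)
    (h2 : HasCompactSupport η) :
    ∫ t, (∫ x in {x | p x ≤ t}, h x ∂τ) * deriv η t = - ∫ x, η (p x) * h x ∂τ := by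
  have hd : Continuous (deriv η) := h1.continuous_deriv le_rfl
  have hdi : Integrable (deriv η) := hd.integrable_of_hasCompactSupport h2.deriv
  have hS : MeasurableSet {q : ℝ × α | p q.2 ≤ q.1} :=
    measurableSet_le (hp.comp measurable_snd) measurable_fst
  have I : Integrable (fun q : ℝ × α => ({q : ℝ × α | p q.2 ≤ q.1}.indicator
      (fun q => deriv η q.1 * h q.2) q)) ((volume : Measure ℝ).prod τ) :=
    (hdi.mul_prod hh).indicator hS
  have E1 : ∀ t, (∫ x in {x | p x ≤ t}, h x ∂τ) * deriv η t =
      ∫ x, {q : ℝ × α | p q.2 ≤ q.1}.indicator (fun q => deriv η q.1 * h q.2) (t, x) ∂τ := by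
    intro t
    rw [mul_comm, ← integral_const_mul, ← integral_indicator (measurableSet_le hp measurable_const)]
    rfl
  simp_rw [E1]
  rw [integral_integral_swap (f := fun t x =>
    {q : ℝ × α | p q.2 ≤ q.1}.indicator (fun q => deriv η q.1 * h q.2) (t, x)) I, ← integral_neg]
  congr 1; ext x
  have : (fun t => {q : ℝ × α | p q.2 ≤ q.1}.indicator (fun q => deriv η q.1 * h q.2) (t, x))
      = (Ici (p x)).indicator (fun t => deriv η t * h x) := by
    ext t; simp only [indicator, mem_ofPred_eq, mem_Ici]
  rw [this, integral_indicator measurableSet_Ici, integral_Ici_eq_integral_Ioi,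
    integral_mul_const, h2.integral_Ioi_deriv_eq h1]
  ring

lemma mono_ibp {F : ℝ → ℝ} (hF : Monotone F) {A B : ℝ} {η : ℝ → ℝ}
    (h1 : ContDiff ℝ 1 η) (h2 : HasCompactSupport η) (h3 : tsupport η ⊆ Ioo A B) :
    ∫ t, F t * deriv η t = - ∫ t in Ioo A B, η t ∂hF.stieltjesFunction.measure := by
  have fin : IsFiniteMeasure (hF.stieltjesFunction.measure.restrict (Ioo A B)) :=
    ⟨by
      rw [Measure.restrict_apply_univ]
      exact (measure_mono Ioo_subset_Icc_self).trans_lt isCompact_Icc.measure_lt_top⟩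
  have key := ibp_cdf (hF.stieltjesFunction.measure.restrict (Ioo A B)) measurable_id
    (h := fun _ => 1) (integrable_const _) h1 h2
  simp only [mul_one, id] at key
  rw [← key]
  have hd : Continuous (deriv η) := h1.continuous_deriv le_rfl
  have hdi : Integrable (deriv η) := hd.integrable_of_hasCompactSupport h2.deriv
  have z : ∫ t, hF.stieltjesFunction A * deriv η t = 0 := by
    rw [integral_const_mul, integral_eq_zero_of_hasDerivAt_of_integrable
      (f := η) (fun x => (h1.differentiable one_ne_zero x).hasDerivAt) hdi
      (h1.continuous.integrable_of_hasCompactSupport h2), mul_zero]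
  have ae : ∀ᵐ t, F t = hF.stieltjesFunction t := by
    have := hF.countable_not_continuousAt.ae_notMem volume
    filter_upwards [this] with t ht
    simp only [not_not] at ht
    rw [hF.stieltjesFunction_eq]
    exact (hF.continuousWithinAt_Ioi_iff_rightLim_eq.1 ht.continuousWithinAt).symm
  have I : ∀ᵐ t, F t * deriv η t = (∫ x in {x | x ≤ t}, (1:ℝ) ∂hF.stieltjesFunction.measure.restrict (Ioo A B)) * deriv η t
      + hF.stieltjesFunction A * deriv η t := by
    filter_upwards [ae] with t ht
    by_cases hm : t ∈ Ioo A B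
    · rw [← add_mul, ht]; congr 1
      rw [setIntegral_const, smul_eq_mul, mul_one, Measure.real, Measure.restrict_apply
        (show MeasurableSet {x | x ≤ t} from measurableSet_Iic)]
      have : {x | x ≤ t} ∩ Ioo A B = Ioc A t := by
        ext x; simp only [mem_inter_iff, mem_ofPred_eq, mem_Ioo, mem_Ioc]
        exact ⟨fun h => ⟨h.2.1, h.1⟩, fun h => ⟨h.2, h.1, h.2.trans_lt hm.2⟩⟩
      rw [this, StieltjesFunction.measure_Ioc, ENNReal.toReal_ofReal]
      · ring
      · rw [sub_nonneg]; exact hF.stieltjesFunction.mono hm.1.le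
    · have : deriv η t = 0 := by
        have : t ∉ tsupport (deriv η) := fun h => hm (h3 (tsupport_deriv_subset h))
        exact image_eq_zero_of_notMem_tsupport this
      simp [this]
  rw [integral_congr_ae I, integral_add, z, add_zero]
  · have hm : Monotone (fun t => ∫ x in {x | x ≤ t}, (1:ℝ) ∂hF.stieltjesFunction.measure.restrict (Ioo A B)) := by
      intro s t hst
      simp only [setIntegral_const, smul_eq_mul, mul_one]
      exact measureReal_mono (fun x (hx : x ≤ s) => hx.trans hst)
    refine hdi.bdd_mul hm.measurable.aestronglyMeasurable
      (c := (hF.stieltjesFunction.measure.restrict (Ioo A B)).real univ) (Eventually.of_forall fun t => ?_)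
    simp only [setIntegral_const, smul_eq_mul, mul_one]
    rw [Real.norm_of_nonneg measureReal_nonneg]
    exact measureReal_mono (subset_univ _)
  · exact hdi.const_mul _

lemma bv_add {E : Type*} [NormedAddCommGroup E] {f g : ℝ → E} {s : Set ℝ}
    (hf : BoundedVariationOn f s) (hg : BoundedVariationOn g s) :
    BoundedVariationOn (fun t => f t + g t) s := by
  have : eVariationOn (fun t => f t + g t) s ≤ eVariationOn f s + eVariationOn g s := by
    apply iSup_le
    rintro ⟨n, u, hu, us⟩
    calc ∑ i ∈ Finset.range n, edist (f (u (i+1)) + g (u (i+1))) (f (u i) + g (u i))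
        ≤ ∑ i ∈ Finset.range n, (edist (f (u (i+1))) (f (u i)) + edist (g (u (i+1))) (g (u i))) :=
          Finset.sum_le_sum fun i _ => edist_add_add_le _ _ _ _
      _ ≤ _ := by
          rw [Finset.sum_add_distrib]
          exact add_le_add (eVariationOn.sum_le hu us) (eVariationOn.sum_le hu us)
  exact (this.trans_lt (ENNReal.add_lt_top.2 ⟨hf.lt_top, hg.lt_top⟩)).ne

lemma bv_id : BoundedVariationOn (fun t : ℝ => t) (Ioo (-1:ℝ) 1) :=
  (monotone_id.monotoneOn _).boundedVariationOn (C := 1) (fun x hx => abs_le.2 ⟨hx.1.le, hx.2.le⟩)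

lemma bv_const (c : ℝ) : BoundedVariationOn (fun _ : ℝ => c) (Ioo (-1:ℝ) 1) :=
  (monotone_const.monotoneOn _).boundedVariationOn (C := |c|) (fun x hx => le_rfl)

lemma bv_decomp {a : ℝ → ℝ} (ha : BoundedVariationOn a (Ioo (-1:ℝ) 1)) :
    ∃ f g : ℝ → ℝ, Monotone f ∧ Monotone g ∧ EqOn a (fun t => f t - g t) (Ioo (-1:ℝ) 1) := by
  have h0 : (0:ℝ) ∈ Ioo (-1:ℝ) 1 := by constructor <;> norm_num
  have hl := ha.locallyBoundedVariationOn
  have m1 := variationOnFromTo.monotoneOn hl h0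
  have m2 := variationOnFromTo.sub_self_monotoneOn hl h0
  have b1 : ∀ x ∈ Ioo (-1:ℝ) 1, |variationOnFromTo a (Ioo (-1:ℝ) 1) 0 x| ≤
      (eVariationOn a (Ioo (-1:ℝ) 1)).toReal := by
    intro x hx
    unfold variationOnFromTo
    split_ifs
    · rw [abs_of_nonneg ENNReal.toReal_nonneg]
      exact ENNReal.toReal_mono ha (eVariationOn.mono _ inter_subset_left)
    · rw [abs_neg, abs_of_nonneg ENNReal.toReal_nonneg]
      exact ENNReal.toReal_mono ha (eVariationOn.mono _ inter_subset_left)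
  have b2 : ∀ x ∈ Ioo (-1:ℝ) 1, |a x - a 0| ≤ (eVariationOn a (Ioo (-1:ℝ) 1)).toReal :=
    fun x hx => ha.dist_le hx h0
  set V := (eVariationOn a (Ioo (-1:ℝ) 1)).toReal
  obtain ⟨f, hf, ef⟩ := m1.exists_monotone_extension
    ⟨-V, by rintro _ ⟨x, hx, rfl⟩; exact (abs_le.1 (b1 x hx)).1⟩
    ⟨V, by rintro _ ⟨x, hx, rfl⟩; exact (abs_le.1 (b1 x hx)).2⟩
  obtain ⟨g, hg, eg⟩ := m2.exists_monotone_extension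
    ⟨-V - V - a 0, by
      rintro _ ⟨x, hx, rfl⟩; have := (abs_le.1 (b1 x hx)); have := (abs_le.1 (b2 x hx))
      simp only [Pi.sub_apply]; linarith⟩
    ⟨V + V - a 0, by
      rintro _ ⟨x, hx, rfl⟩; have := (abs_le.1 (b1 x hx)); have := (abs_le.1 (b2 x hx))
      simp only [Pi.sub_apply]; linarith⟩
  refine ⟨f, g, hf, hg, fun x hx => ?_⟩
  simp only [← ef hx, ← eg hx, Pi.sub_apply]; ring

lemma mono_intOn {F : ℝ → ℝ} (hF : Monotone F) : IntegrableOn F (Ioo (-1:ℝ) 1) :=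
  (MonotoneOn.integrableOn_isCompact (isCompact_Icc (a := (-1:ℝ)) (b := 1))
    (hF.monotoneOn _)).mono_set Ioo_subset_Icc_self

lemma bv_intOn {a : ℝ → ℝ} (ha : BoundedVariationOn a (Ioo (-1:ℝ) 1)) :
    IntegrableOn a (Ioo (-1:ℝ) 1) := by
  obtain ⟨f, g, hf, hg, e⟩ := bv_decomp ha
  exact ((mono_intOn hf).sub (mono_intOn hg)).congr_fun (fun x hx => (e hx).symm) measurableSet_Ioo

/-- one-dimensional decomposition of the derivative of a monotone function -/
lemma mono1 {F : ℝ → ℝ} (hF : Monotone F) : ∃ (dF : ℝ → ℝ) (ms : Measure ℝ),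
    IsFiniteMeasure ms ∧ ms ⟂ₘ (volume : Measure ℝ) ∧ Integrable dF ∧
    (∀ᵐ t, t ∈ Ioo (-1:ℝ) 1 → HasDerivAt F (dF t) t) ∧
    ∀ η : ℝ → ℝ, ContDiff ℝ 1 η → HasCompactSupport η → tsupport η ⊆ Ioo (-1:ℝ) 1 →
      ∫ t in Ioo (-1:ℝ) 1, F t * deriv η t = (- ∫ t in Ioo (-1:ℝ) 1, η t * dF t) - ∫ t, η t ∂ms := by
  set μ := hF.stieltjesFunction.measure with hμ
  set μ' := μ.restrict (Ioo (-1:ℝ) 1) with hμ'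
  have fin : IsFiniteMeasure μ' :=
    ⟨by
      rw [hμ', Measure.restrict_apply_univ]
      exact (measure_mono Ioo_subset_Icc_self).trans_lt isCompact_Icc.measure_lt_top⟩
  refine ⟨fun t => (μ'.rnDeriv volume t).toReal, μ'.singularPart volume, inferInstance,
    Measure.mutuallySingular_singularPart _ _, Measure.integrable_toReal_rnDeriv, ?_, ?_⟩
  · filter_upwards [hF.ae_hasDerivAt, Measure.rnDeriv_restrict μ volume
      (measurableSet_Ioo (a := (-1:ℝ)) (b := 1))] with t h1 h2 h3
    rw [h2, indicator_of_mem h3]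
    exact h1
  · intro η h1 h2 h3
    have z : ∫ t in Ioo (-1:ℝ) 1, F t * deriv η t = ∫ t, F t * deriv η t := by
      apply setIntegral_eq_integral_of_forall_compl_eq_zero
      intro t ht
      rw [image_eq_zero_of_notMem_tsupport (fun h => ht (h3 (tsupport_deriv_subset h))), mul_zero]
    have z2 : ∫ t in Ioo (-1:ℝ) 1, η t * (μ'.rnDeriv volume t).toReal =
        ∫ t, η t * (μ'.rnDeriv volume t).toReal := by
      apply setIntegral_eq_integral_of_forall_compl_eq_zero
      intro t ht
      rw [image_eq_zero_of_notMem_tsupport (fun h => ht (h3 h)), zero_mul]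
    obtain ⟨C, hC⟩ := h2.exists_bound_of_continuous h1.continuous
    have hi : ∀ m : Measure ℝ, IsFiniteMeasure m → Integrable η m := fun m _ =>
      Integrable.of_bound h1.continuous.aestronglyMeasurable C (Eventually.of_forall hC)
    rw [z, z2, mono_ibp hF h1 h2 h3]
    have e : ∫ t, η t ∂μ' = ∫ t, η t ∂(μ'.singularPart volume) +
        ∫ t, η t ∂((volume : Measure ℝ).withDensity (μ'.rnDeriv volume)) := by
      conv_lhs => rw [Measure.haveLebesgueDecomposition_add μ' (volume : Measure ℝ)]
      exact integral_add_measure (hi _ inferInstance) (hi _ inferInstance)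
    rw [e, integral_withDensity_eq_integral_toReal_smul (Measure.measurable_rnDeriv _ _)
      (Measure.rnDeriv_lt_top _ _)]
    simp only [smul_eq_mul]
    simp_rw [mul_comm (η _)]
    ring

/-- The identification of `ℝ × ℝ` and `V2`. -/
def mk2 : ℝ × ℝ ≃ᵐ V2 := MeasurableEquiv.finTwoArrow.symm

@[simp] lemma mk2_apply (p : ℝ × ℝ) : mk2 p = ![p.1, p.2] := rfl

lemma mk2_mp : MeasurePreserving mk2 (volume : Measure (ℝ × ℝ)) volume :=
  (volume_preserving_finTwoArrow ℝ).symm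

/-- Lebesgue measure on `(0,1)` and `(-1,1)`. -/
abbrev I0 : Measure ℝ := volume.restrict (Ioo (0:ℝ) 1)
/-- Lebesgue measure on `(-1,1)`. -/
abbrev I1 : Measure ℝ := volume.restrict (Ioo (-1:ℝ) 1)

lemma rect_open : IsOpen Rect :=
  (isOpen_Ioo.preimage (continuous_apply 0)).inter (isOpen_Ioo.preimage (continuous_apply 1))

lemma rect_map : (volume : Measure V2).restrict Rect = Measure.map mk2 (I0.prod I1) := by
  rw [Measure.prod_restrict, ← mk2_mp.map_eq, ← Measure.volume_eq_prod,
    Measure.restrict_map mk2.measurable rect_open.measurableSet]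
  congr 1

lemma rect_integral (f : V2 → ℝ) : ∫ x in Rect, f x = ∫ p, f (mk2 p) ∂(I0.prod I1) := by
  rw [rect_map, integral_map_equiv]

lemma rect_integrable (f : V2 → ℝ) :
    IntegrableOn f Rect ↔ Integrable (fun p => f (mk2 p)) (I0.prod I1) := by
  rw [IntegrableOn, rect_map, mk2.measurableEmbedding.integrable_map_iff]; rfl

lemma rect_ae (P : V2 → Prop) :
    (∀ᵐ x ∂((volume : Measure V2).restrict Rect), P x) ↔ ∀ᵐ p ∂(I0.prod I1), P (mk2 p) := by
  rw [rect_map, mk2.measurableEmbedding.ae_map_iff]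

lemma rect_ae_snd {P : ℝ → Prop} (h : ∀ᵐ t ∂I1, P t) :
    ∀ᵐ x ∂((volume : Measure V2).restrict Rect), P (x 1) := by
  rw [rect_ae]
  exact Measure.quasiMeasurePreserving_snd.ae h

lemma cont_I0 {k : ℝ → ℝ} (hk : Continuous k) : Integrable k I0 :=
  (hk.continuousOn.integrableOn_compact (isCompact_Icc (a := (0:ℝ)) (b := 1))).mono_set
    Ioo_subset_Icc_self

lemma rect_prod_integrable {k g : ℝ → ℝ} (hk : Continuous k) (hg : IntegrableOn g (Ioo (-1:ℝ) 1)) :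
    IntegrableOn (fun x : V2 => k (x 0) * g (x 1)) Rect := by
  rw [rect_integrable]
  exact (cont_I0 hk).mul_prod hg

lemma test_slice {φ : V2 → ℝ} (hφ : TestF Rect φ) (s : ℝ) :
    ContDiff ℝ 1 (fun t => φ ![s, t]) ∧ HasCompactSupport (fun t => φ ![s, t]) ∧
      tsupport (fun t => φ ![s, t]) ⊆ Ioo (-1:ℝ) 1 ∧
      ∀ t, deriv (fun t => φ ![s, t]) t = pd 1 φ ![s, t] := by
  have hc : ContDiff ℝ (⊤ : ℕ∞) (fun t : ℝ => (![s, t] : V2)) := by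
    rw [contDiff_pi]; intro i; fin_cases i
    · exact contDiff_const
    · exact contDiff_id
  have sub : tsupport (fun t => φ ![s, t]) ⊆ (fun t : ℝ => (![s, t] : V2)) ⁻¹' tsupport φ :=
    tsupport_comp_subset_preimage _ hc.continuous
  refine ⟨(hφ.1.comp hc).of_le (by exact_mod_cast le_top), ?_, ?_, ?_⟩
  · apply HasCompactSupport.of_support_subset_isCompact (hφ.2.1.image (continuous_apply 1))
    intro t ht
    exact ⟨![s, t], subset_tsupport _ ht, rfl⟩
  · intro t ht
    exact (hφ.2.2 (sub ht)).2
  · intro t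
    have h1 : HasDerivAt (fun t : ℝ => (![s, t] : V2)) (Pi.single 1 1) t := by
      rw [hasDerivAt_pi]; intro i; fin_cases i
      · simpa using hasDerivAt_const t s
      · simpa using hasDerivAt_id' t
    exact (((hφ.1.differentiable (by simp)) ![s, t]).hasFDerivAt.comp_hasDerivAt t h1).deriv

lemma test_pd {φ : V2 → ℝ} {Ω : Set V2} (hφ : TestF Ω φ) (j : Fin 2) :
    Continuous (pd j φ) ∧ HasCompactSupport (pd j φ) ∧ ∀ x, x ∉ Ω → pd j φ x = 0 := by
  refine ⟨(hφ.1.continuous_fderiv (by simp)).clm_apply continuous_const, ?_, ?_⟩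
  · exact (hφ.2.1.fderiv ℝ).comp_left (g := fun L : V2 →L[ℝ] ℝ => L (Pi.single j 1)) rfl
  · intro x hx
    have : fderiv ℝ φ x = 0 :=
      image_eq_zero_of_notMem_tsupport (fun h => hx (hφ.2.2 (tsupport_fderiv_subset ℝ h)))
    simp [pd, this]

lemma mono2 {F : ℝ → ℝ} (hF : Monotone F) {k : ℝ → ℝ} (hk : Continuous k) : ∃ (dF : ℝ → ℝ),
    Integrable dF ∧ (∀ᵐ t, t ∈ Ioo (-1:ℝ) 1 → HasDerivAt F (dF t) t) ∧
    ∃ T, SingF T ∧ ∀ φ, TestF Rect φ →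
      ∫ x in Rect, k (x 0) * F (x 1) * pd 1 φ x =
        (- ∫ x in Rect, φ x * (k (x 0) * dF (x 1))) - T φ := by
  obtain ⟨dF, ms, hfin, hsing, hdF, hder, H⟩ := mono1 hF
  refine ⟨dF, hdF, hder, fun φ => ∫ x, φ x * k (x 0) ∂(Measure.map mk2 (I0.prod ms)),
    ⟨Measure.map mk2 (I0.prod ms), Measure.isFiniteMeasure_map _ _, ?_, fun x => k (x 0), ?_,
      fun φ _ _ => rfl⟩, ?_⟩
  · obtain ⟨s, hs, h1, h2⟩ := hsing
    have hm : MeasurableSet {x : V2 | x 1 ∈ s} := measurable_pi_apply 1 hs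
    refine ⟨{x | x 1 ∈ s}, hm, ?_, ?_⟩
    · rw [Measure.map_apply mk2.measurable hm]
      have : mk2 ⁻¹' {x | x 1 ∈ s} = univ ×ˢ s := by ext p; simp
      rw [this, Measure.prod_prod, h1, mul_zero]
    · rw [← mk2_mp.map_eq, Measure.map_apply mk2.measurable hm.compl]
      have : mk2 ⁻¹' {x | x 1 ∈ s}ᶜ = univ ×ˢ sᶜ := by ext p; simp
      rw [this, Measure.volume_eq_prod, Measure.prod_prod, h2, mul_zero]
  · rw [mk2.measurableEmbedding.integrable_map_iff]
    have := (cont_I0 hk).mul_prod (integrable_const (1:ℝ) (μ := ms))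
    simpa [Function.comp_def] using this
  · intro φ hφ
    have i1 : Integrable (fun x : V2 => pd 1 φ x * (k (x 0) * F (x 1))) (volume.restrict Rect) :=
      integrable_mul_test (test_pd hφ 1).1 (test_pd hφ 1).2.1
        (rect_prod_integrable hk (mono_intOn hF))
    have i2 : Integrable (fun x : V2 => φ x * (k (x 0) * dF (x 1))) (volume.restrict Rect) :=
      integrable_mul_test hφ.1.continuous hφ.2.1 (rect_prod_integrable hk hdF.integrableOn)
    have i3 : Integrable (fun p : ℝ × ℝ => φ (mk2 p) * k (mk2 p 0)) (I0.prod ms) := by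
      have hh : Integrable (fun x : V2 => k (x 0)) (Measure.map mk2 (I0.prod ms)) := by
        rw [mk2.measurableEmbedding.integrable_map_iff]
        have := (cont_I0 hk).mul_prod (integrable_const (1:ℝ) (μ := ms))
        simpa [Function.comp_def] using this
      have := integrable_mul_test hφ.1.continuous hφ.2.1 hh
      rw [mk2.measurableEmbedding.integrable_map_iff] at this
      exact this
    have i1' := (rect_integrable _).1 i1
    have i2' := (rect_integrable _).1 i2
    simp_rw [mul_comm _ (pd 1 φ _)]
    rw [integral_map_equiv, rect_integral, rect_integral, integral_prod _ i1', integral_prod _ i2',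
      integral_prod _ i3, ← integral_neg, ← integral_sub]
    · congr 1; ext s
      obtain ⟨q1, q2, q3, q4⟩ := test_slice hφ s
      have := H _ q1 q2 q3
      simp only [q4] at this
      calc _ = k s * ∫ t in Ioo (-1:ℝ) 1, F t * pd 1 φ ![s, t] := by
            rw [← integral_const_mul]; congr 1; ext t; simp; ring
        _ = _ := by
            rw [this, mul_sub, mul_neg, ← integral_const_mul, ← integral_const_mul]
            congr 1
            · congr 2; ext t; simp; ring
            · congr 1; ext t; simp; ring
    · exact i2'.integral_prod_left.neg
    · exact i3.integral_prod_left

lemma bv2 {a : ℝ → ℝ} (ha : BoundedVariationOn a (Ioo (-1:ℝ) 1)) {k : ℝ → ℝ} (hk : Continuous k) :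
    (∀ᵐ t ∂I1, DifferentiableAt ℝ a t) ∧ IntegrableOn (deriv a) (Ioo (-1:ℝ) 1) ∧
    ∃ T, SingF T ∧ ∀ φ, TestF Rect φ →
      ∫ x in Rect, k (x 0) * a (x 1) * pd 1 φ x =
        (- ∫ x in Rect, φ x * (k (x 0) * deriv a (x 1))) - T φ := by
  obtain ⟨f, g, hf, hg, e⟩ := bv_decomp ha
  obtain ⟨df, f1, f2, T, hT, f3⟩ := mono2 hf hk
  obtain ⟨dg, g1, g2, S, hS, g3⟩ := mono2 hg hk
  have hd : ∀ᵐ t ∂I1, HasDerivAt a (df t - dg t) t := by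
    rw [ae_restrict_iff' measurableSet_Ioo]
    filter_upwards [f2, g2] with t h1 h2 ht
    refine ((h1 ht).sub (h2 ht)).congr_of_eventuallyEq ?_
    filter_upwards [isOpen_Ioo.mem_nhds ht] with s hs
    exact e hs
  have hd' : ∀ᵐ t ∂I1, df t - dg t = deriv a t := hd.mono fun t h => h.deriv.symm
  refine ⟨hd.mono fun t h => h.differentiableAt, (f1.sub g1).integrableOn.congr hd',
    fun φ => T φ + - S φ, hT.add hS.neg, fun φ hφ => ?_⟩
  have e1 : ∫ x in Rect, k (x 0) * a (x 1) * pd 1 φ x = (∫ x in Rect, k (x 0) * f (x 1) * pd 1 φ x)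
      - ∫ x in Rect, k (x 0) * g (x 1) * pd 1 φ x := by
    rw [← integral_sub]
    · refine setIntegral_congr_fun rect_open.measurableSet fun x hx => ?_
      simp only [e hx.2]; ring
    · simp_rw [mul_comm _ (pd 1 φ _)]
      exact integrable_mul_test (test_pd hφ 1).1 (test_pd hφ 1).2.1
        (rect_prod_integrable hk (mono_intOn hf))
    · simp_rw [mul_comm _ (pd 1 φ _)]
      exact integrable_mul_test (test_pd hφ 1).1 (test_pd hφ 1).2.1
        (rect_prod_integrable hk (mono_intOn hg))
  have e2 : ∫ x in Rect, φ x * (k (x 0) * deriv a (x 1)) = (∫ x in Rect, φ x * (k (x 0) * df (x 1)))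
      - ∫ x in Rect, φ x * (k (x 0) * dg (x 1)) := by
    rw [← integral_sub]
    · apply integral_congr_ae
      filter_upwards [rect_ae_snd hd'] with x hx
      rw [← hx]; ring
    · exact integrable_mul_test hφ.1.continuous hφ.2.1 (rect_prod_integrable hk f1.integrableOn)
    · exact integrable_mul_test hφ.1.continuous hφ.2.1 (rect_prod_integrable hk g1.integrableOn)
  rw [e1, e2, f3 φ hφ, g3 φ hφ]; ring

lemma test_slice0 {φ : V2 → ℝ} (hφ : TestF Rect φ) (t : ℝ) :
    ContDiff ℝ 1 (fun s => φ ![s, t]) ∧ HasCompactSupport (fun s => φ ![s, t]) ∧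
      tsupport (fun s => φ ![s, t]) ⊆ Ioo (0:ℝ) 1 ∧
      ∀ s, deriv (fun s => φ ![s, t]) s = pd 0 φ ![s, t] := by
  have hc : ContDiff ℝ (⊤ : ℕ∞) (fun s : ℝ => (![s, t] : V2)) := by
    rw [contDiff_pi]; intro i; fin_cases i
    · exact contDiff_id
    · exact contDiff_const
  have sub : tsupport (fun s => φ ![s, t]) ⊆ (fun s : ℝ => (![s, t] : V2)) ⁻¹' tsupport φ :=
    tsupport_comp_subset_preimage _ hc.continuous
  refine ⟨(hφ.1.comp hc).of_le (by exact_mod_cast le_top), ?_, ?_, ?_⟩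
  · apply HasCompactSupport.of_support_subset_isCompact (hφ.2.1.image (continuous_apply 0))
    intro s hs
    exact ⟨![s, t], subset_tsupport _ hs, rfl⟩
  · intro s hs
    exact (hφ.2.2 (sub hs)).1
  · intro s
    have h1 : HasDerivAt (fun s : ℝ => (![s, t] : V2)) (Pi.single 0 1) s := by
      rw [hasDerivAt_pi]; intro i; fin_cases i
      · simpa using hasDerivAt_id' s
      · simpa using hasDerivAt_const s t
    exact (((hφ.1.differentiable (by simp)) ![s, t]).hasFDerivAt.comp_hasDerivAt s h1).deriv

lemma ibp_k1 {k k' η : ℝ → ℝ} (hk : ∀ s, HasDerivAt k (k' s) s) (hk' : Continuous k')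
    (h1 : ContDiff ℝ 1 η) (h2 : HasCompactSupport η) {A B : ℝ} (h3 : tsupport η ⊆ Ioo A B) :
    ∫ s in Ioo A B, k s * deriv η s = - ∫ s in Ioo A B, η s * k' s := by
  have z : ∫ t in Ioo A B, k t * deriv η t = ∫ t, k t * deriv η t := by
    apply setIntegral_eq_integral_of_forall_compl_eq_zero
    intro t ht
    rw [image_eq_zero_of_notMem_tsupport (fun h => ht (h3 (tsupport_deriv_subset h))), mul_zero]
  have z2 : ∫ t in Ioo A B, η t * k' t = ∫ t, k' t * η t := by
    simp_rw [mul_comm (η _)]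
    apply setIntegral_eq_integral_of_forall_compl_eq_zero
    intro t ht
    rw [image_eq_zero_of_notMem_tsupport (fun h => ht (h3 h)), mul_zero]
  have kc : Continuous k := continuous_iff_continuousAt.2 fun s => (hk s).continuousAt
  rw [z, z2]
  apply integral_mul_deriv_eq_deriv_mul_of_integrable (fun s _ => hk s)
    (fun s _ => ((h1.differentiable (by simp)) s).hasDerivAt)
  · exact (kc.mul (h1.continuous_deriv le_rfl)).integrable_of_hasCompactSupport h2.deriv.mul_left
  · exact (hk'.mul h1.continuous).integrable_of_hasCompactSupport h2.mul_left
  · exact (kc.mul h1.continuous).integrable_of_hasCompactSupport h2.mul_left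

lemma ibp_k {k k' : ℝ → ℝ} (hk : ∀ s, HasDerivAt k (k' s) s) (hk' : Continuous k')
    {a : ℝ → ℝ} (ha : IntegrableOn a (Ioo (-1:ℝ) 1)) {φ : V2 → ℝ} (hφ : TestF Rect φ) :
    ∫ x in Rect, k (x 0) * a (x 1) * pd 0 φ x = - ∫ x in Rect, φ x * (k' (x 0) * a (x 1)) := by
  have kc : Continuous k := continuous_iff_continuousAt.2 fun s => (hk s).continuousAt
  have i1 : Integrable (fun x : V2 => pd 0 φ x * (k (x 0) * a (x 1))) (volume.restrict Rect) :=
    integrable_mul_test (test_pd hφ 0).1 (test_pd hφ 0).2.1 (rect_prod_integrable kc ha)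
  have i2 : Integrable (fun x : V2 => φ x * (k' (x 0) * a (x 1))) (volume.restrict Rect) :=
    integrable_mul_test hφ.1.continuous hφ.2.1 (rect_prod_integrable hk' ha)
  have i1' := (rect_integrable _).1 i1
  have i2' := (rect_integrable _).1 i2
  simp_rw [mul_comm _ (pd 0 φ _)]
  rw [rect_integral, rect_integral, integral_prod_symm _ i1', integral_prod_symm _ i2',
    ← integral_neg]
  congr 1; ext t
  obtain ⟨q1, q2, q3, q4⟩ := test_slice0 hφ t
  have := ibp_k1 hk hk' q1 q2 q3
  simp only [q4] at this
  calc _ = a t * ∫ s in Ioo (0:ℝ) 1, k s * pd 0 φ ![s, t] := by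
        rw [← integral_const_mul]; congr 1; ext s; simp; ring
    _ = _ := by
        rw [this, mul_neg, ← integral_const_mul]
        congr 2; ext s; simp; ring

lemma gs_int {Ω : Set V2} {u : V2 → V2} {gu : V2 → Mat2} {σ : Measure V2} {gs : V2 → Mat2}
    (h : HasBVDerivOn Ω u gu σ gs) (i j : Fin 2) : Integrable (fun x => gs x i j) σ := by
  have : IsFiniteMeasure σ := ⟨h.fin.lt_top⟩
  refine Integrable.of_bound (h.meas_gs i j).aestronglyMeasurable 1 ?_
  filter_upwards [h.unit] with x hx
  have h1 : ∑ i, ∑ j, gs x i j ^ 2 = 1 := by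
    rw [mnorm] at hx
    exact (Real.sqrt_eq_one).1 hx
  rw [Real.norm_eq_abs, ← sq_le_one_iff_abs_le_one, ← h1]
  calc gs x i j ^ 2 ≤ ∑ j, gs x i j ^ 2 :=
        Finset.single_le_sum (f := fun j => gs x i j ^ 2) (fun _ _ => sq_nonneg _) (Finset.mem_univ j)
    _ ≤ _ := Finset.single_le_sum (f := fun i => ∑ j, gs x i j ^ 2)
        (fun _ _ => Finset.sum_nonneg fun _ _ => sq_nonneg _) (Finset.mem_univ i)

lemma gs_SingF {Ω : Set V2} {u : V2 → V2} {gu : V2 → Mat2} {σ : Measure V2} {gs : V2 → Mat2}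
    (h : HasBVDerivOn Ω u gu σ gs) (i j : Fin 2) :
    SingF (fun φ => ∫ x, φ x * gs x i j ∂σ) :=
  ⟨σ, ⟨h.fin.lt_top⟩, h.perp, _, gs_int h i j, fun _ _ _ => rfl⟩

lemma mem_of_conc {Ω : Set V2} {u : V2 → V2} {gu : V2 → Mat2} {σ : Measure V2} {gs : V2 → Mat2}
    (h : HasBVDerivOn Ω u gu σ gs) : ∀ᵐ x ∂σ, x ∈ Ω := by
  rw [ae_iff]; exact h.conc

/-- Identification of the gradient of maps which are affine in the first variable. -/
lemma gradId {u : V2 → V2} {gu : V2 → Mat2} {σ : Measure V2} {gs : V2 → Mat2}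
    (h : HasBVDerivOn Rect u gu σ gs) (i : Fin 2) {a b : ℝ → ℝ}
    (ha : BoundedVariationOn a (Ioo (-1:ℝ) 1)) (hb : BoundedVariationOn b (Ioo (-1:ℝ) 1))
    (hu : ∀ᵐ x ∂(volume.restrict Rect), u x i = x 0 * a (x 1) + b (x 1)) :
    (∀ᵐ x ∂(volume.restrict Rect), gu x i 0 = a (x 1)) ∧
    (∀ᵐ x ∂(volume.restrict Rect), gu x i 1 = x 0 * deriv a (x 1) + deriv b (x 1)) ∧
    ∀ᵐ x ∂σ, gs x i 0 = 0 := by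
  have fin : IsFiniteMeasure σ := ⟨h.fin.lt_top⟩
  have A := bv_intOn ha
  have B := bv_intOn hb
  have split : ∀ φ, TestF Rect φ → ∀ j, ∫ x in Rect, u x i * pd j φ x =
      (∫ x in Rect, (fun s => s) (x 0) * a (x 1) * pd j φ x) +
        ∫ x in Rect, (fun _ => 1) (x 0) * b (x 1) * pd j φ x := by
    intro φ hφ j
    rw [← integral_add]
    · apply integral_congr_ae
      filter_upwards [hu] with x hx
      rw [hx]; ring
    · simp_rw [mul_comm _ (pd j φ _)]
      exact integrable_mul_test (test_pd hφ j).1 (test_pd hφ j).2.1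
        (rect_prod_integrable continuous_id' A)
    · simp_rw [mul_comm _ (pd j φ _)]
      exact integrable_mul_test (test_pd hφ j).1 (test_pd hφ j).2.1
        (rect_prod_integrable continuous_const B)
  have h0 := lemU rect_open h.perp (g := fun x => gu x i 0 - a (x 1)) (h := fun x => gs x i 0)
    ((h.int_gu i 0).sub (by simpa using rect_prod_integrable (continuous_const (y := (1:ℝ))) A))
    (gs_int h i 0) ?_
  · refine ⟨h0.1.mono fun x hx => sub_eq_zero.1 hx, ?_, ?_⟩
    · obtain ⟨_, da, T, hT, HT⟩ := bv2 ha (k := fun s => s) continuous_id'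
      obtain ⟨_, db, S, hS, HS⟩ := bv2 hb (k := fun _ => 1) continuous_const
      have i1 := rect_prod_integrable (k := fun s => s) continuous_id' da
      have i2 := rect_prod_integrable (k := fun _ => 1) continuous_const db
      have := lemU' rect_open (g := fun x => gu x i 1 - (x 0 * deriv a (x 1) + deriv b (x 1)))
        ((gs_SingF h i 1).add (hT.add hS).neg)
        ((h.int_gu i 1).sub (by simpa [Pi.add_def] using i1.add i2)) ?_
      · exact this.mono fun x hx => sub_eq_zero.1 hx
      · intro φ hφ
        have e := h.ibp φ hφ.1 hφ.2.1 hφ.2.2 i 1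
        rw [split φ hφ 1, HT φ hφ, HS φ hφ] at e
        have : ∫ x in Rect, φ x * (gu x i 1 - (x 0 * deriv a (x 1) + deriv b (x 1))) =
            (∫ x in Rect, φ x * gu x i 1) - ((∫ x in Rect, φ x * ((fun s => s) (x 0) * deriv a (x 1)))
              + ∫ x in Rect, φ x * ((fun _ => 1) (x 0) * deriv b (x 1))) := by
          rw [← integral_add, ← integral_sub]
          · congr 1; ext x; simp only; ring
          · exact integrable_mul_test hφ.1.continuous hφ.2.1 (h.int_gu i 1)
          · exact (integrable_mul_test hφ.1.continuous hφ.2.1 i1).add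
              (integrable_mul_test hφ.1.continuous hφ.2.1 i2)
          · exact integrable_mul_test hφ.1.continuous hφ.2.1 i1
          · exact integrable_mul_test hφ.1.continuous hφ.2.1 i2
        rw [this]
        linarith
    · filter_upwards [h0.2, mem_of_conc h] with x hx hm using hx hm
  · intro φ hφ
    have e := h.ibp φ hφ.1 hφ.2.1 hφ.2.2 i 0
    rw [split φ hφ 0, ibp_k (fun s => hasDerivAt_id' s) continuous_const A hφ,
      ibp_k (fun s => hasDerivAt_const s 1) continuous_const B hφ] at e
    have : ∫ x in Rect, φ x * (gu x i 0 - a (x 1)) =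
        (∫ x in Rect, φ x * gu x i 0) - ∫ x in Rect, φ x * (1 * a (x 1)) := by
      rw [← integral_sub]
      · congr 1; ext x; ring
      · exact integrable_mul_test hφ.1.continuous hφ.2.1 (h.int_gu i 0)
      · exact integrable_mul_test hφ.1.continuous hφ.2.1 (rect_prod_integrable continuous_const A)
    rw [this]
    simp only [zero_mul, mul_zero, integral_zero] at e
    linarith

lemma cpt_sub {K : Set ℝ} (hK : IsCompact K) {A B : ℝ} (hAB : A < B) (h : K ⊆ Ioo A B) :
    ∃ a b, A < a ∧ b < B ∧ K ⊆ Icc a b := by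
  rcases K.eq_empty_or_nonempty with rfl | hne
  · exact ⟨(A+B)/2, (A+B)/2, by linarith, by linarith, empty_subset _⟩
  · obtain ⟨a, ha⟩ := hK.exists_isLeast hne
    obtain ⟨b, hb⟩ := hK.exists_isGreatest hne
    exact ⟨a, b, (h ha.1).1, (h hb.1).2, fun x hx => ⟨ha.2 hx, hb.2 hx⟩⟩

/-- A smooth transition on a given interval. -/
lemma exists_theta {A B : ℝ} (hAB : A < B) : ∃ θ ρ : ℝ → ℝ, ContDiff ℝ (⊤ : ℕ∞) θ ∧
    ContDiff ℝ (⊤ : ℕ∞) ρ ∧ (∀ t, HasDerivAt θ (ρ t) t) ∧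
    ∃ a b, A < a ∧ a < b ∧ b < B ∧ (∀ t ≤ a, θ t = 0) ∧ (∀ t, b ≤ t → θ t = 1) ∧
      (∀ t, t ∉ Icc a b → ρ t = 0) := by
  set a := (2*A+B)/3
  set b := (A+2*B)/3
  have hab : a < b := by simp only [a, b]; linarith
  have hc : ContDiff ℝ (⊤ : ℕ∞) (fun t => Real.smoothTransition ((t - a)/(b-a))) :=
    Real.smoothTransition.contDiff.comp ((contDiff_id.sub contDiff_const).div_const _)
  have z : ∀ t ≤ a, Real.smoothTransition ((t - a)/(b-a)) = 0 := fun t ht =>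
    Real.smoothTransition.zero_of_nonpos (div_nonpos_of_nonpos_of_nonneg (by linarith) (by linarith))
  have o : ∀ t, b ≤ t → Real.smoothTransition ((t - a)/(b-a)) = 1 := fun t ht =>
    Real.smoothTransition.one_of_one_le ((one_le_div (by linarith)).2 (by linarith))
  refine ⟨fun t => Real.smoothTransition ((t - a)/(b-a)), deriv _, hc, ?_,
    fun t => (hc.differentiable (by simp) t).hasDerivAt, a, b, by simp only [a]; linarith, hab,
    by simp only [b]; linarith, z, o, ?_⟩
  · exact (contDiff_infty_iff_deriv.1 hc).2
  · intro t ht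
    rw [mem_Icc, not_and_or, not_le, not_le] at ht
    rcases ht with ht | ht
    · have : (fun t => Real.smoothTransition ((t - a)/(b-a))) =ᶠ[𝓝 t] fun _ => 0 := by
        filter_upwards [Iio_mem_nhds ht] with s hs using z s (le_of_lt hs)
      rw [this.deriv_eq]; simp
    · have : (fun t => Real.smoothTransition ((t - a)/(b-a))) =ᶠ[𝓝 t] fun _ => 1 := by
        filter_upwards [Ioi_mem_nhds ht] with s hs using o s (le_of_lt hs)
      rw [this.deriv_eq]; simp

lemma dbr1 {f : ℝ → ℝ} (hf : IntegrableOn f (Ioo (-1:ℝ) 1))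
    (H : ∀ η η' : ℝ → ℝ, ContDiff ℝ (⊤ : ℕ∞) η → HasCompactSupport η →
      tsupport η ⊆ Ioo (-1:ℝ) 1 → (∀ t, HasDerivAt η (η' t) t) → Continuous η' →
      ∫ t in Ioo (-1:ℝ) 1, f t * η' t = 0) :
    ∃ c, ∀ᵐ t ∂I1, f t = c := by
  obtain ⟨θ, ρ, hθ, hρ, hd, a, b, hA, hab, hB, θ0, θ1, ρ0⟩ := exists_theta (A := -1) (B := 1) (by norm_num)
  set c := ∫ t in Ioo (-1:ℝ) 1, f t * ρ t with hc
  refine ⟨c, ?_⟩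
  have hcont : ∀ {k : ℝ → ℝ}, Continuous k → Integrable (fun t => f t * k t) I1 := by
    intro k hk
    obtain ⟨C, hC⟩ := (isCompact_Icc (a := (-1:ℝ)) (b := 1)).exists_bound_of_continuousOn hk.continuousOn
    have := hf.bdd_mul (c := C) hk.aestronglyMeasurable (by
      rw [ae_restrict_iff' measurableSet_Ioo]
      exact Eventually.of_forall fun x hx => hC x (Ioo_subset_Icc_self hx))
    simpa [mul_comm] using this
  have := isOpen_Ioo.ae_eq_zero_of_integral_contDiff_smul_eq_zero (μ := (volume : Measure ℝ))
    (U := Ioo (-1:ℝ) 1) (f := fun t => f t - c)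
    (IntegrableOn.locallyIntegrableOn (hf.sub (integrableOn_const (by simp)))) ?_
  · rw [ae_restrict_iff' measurableSet_Ioo]
    filter_upwards [this] with t h1 h2 using sub_eq_zero.1 (h1 h2)
  · intro Φ h1 h2 h3
    obtain ⟨a', b', hA', hB', hK⟩ := cpt_sub h2 (by norm_num) h3
    have Φ0 : ∀ t, t ∉ Icc a' b' → Φ t = 0 := fun t ht =>
      image_eq_zero_of_notMem_tsupport fun h => ht (hK h)
    set P := fun t => ∫ s in (-1:ℝ)..t, Φ s with hP
    have dP : ∀ t, HasDerivAt P (Φ t) t := fun t =>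
      intervalIntegral.integral_hasDerivAt_right (h1.continuous.intervalIntegrable _ _)
        (h1.continuous.stronglyMeasurableAtFilter _ _) h1.continuous.continuousAt
    have cP : ContDiff ℝ (⊤ : ℕ∞) P := by
      rw [contDiff_infty_iff_deriv]
      refine ⟨fun t => (dP t).differentiableAt, ?_⟩
      have : deriv P = Φ := funext fun t => (dP t).deriv
      rw [this]; exact h1
    have lo : ∀ t, t < a' → P t = 0 := by
      intro t ht
      apply intervalIntegral.integral_zero_ae
      refine Eventually.of_forall fun s hs => Φ0 s fun h => ?_
      have := hs.2.trans (max_le hA'.le ht.le)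
      rcases this.lt_or_eq with h' | h'
      · linarith [h.1]
      · rcases max_cases (-1:ℝ) t with h'' | h'' <;> have := hs.2 <;> rw [h''.1] at this <;> linarith [h.1]
    have hi : ∀ t, b' < t → P t = P 1 := by
      intro t ht
      rw [← sub_eq_zero, hP]
      simp only
      rw [intervalIntegral.integral_interval_sub_left (h1.continuous.intervalIntegrable _ _)
        (h1.continuous.intervalIntegrable _ _)]
      apply intervalIntegral.integral_zero_ae
      refine Eventually.of_forall fun s hs => Φ0 s fun h => ?_
      have := lt_of_le_of_lt h.2 (lt_min hB' ht)
      exact absurd (hs.1) (not_lt.2 this.le)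
    have key := H (fun t => P t - P 1 * θ t) (fun t => Φ t - P 1 * ρ t)
      (cP.sub (contDiff_const.mul hθ)) ?_ ?_ (fun t => (dP t).sub ((hd t).const_mul _))
      (h1.continuous.sub (continuous_const.mul hρ.continuous))
    · have e1 : ∫ t in Ioo (-1:ℝ) 1, f t * (Φ t - P 1 * ρ t) =
          (∫ t in Ioo (-1:ℝ) 1, f t * Φ t) - P 1 * c := by
        rw [hc, ← integral_const_mul, ← integral_sub (hcont h1.continuous)
          ((hcont hρ.continuous).const_mul _)]
        congr 1; ext t; ring
      have e2 : ∫ t in Ioo (-1:ℝ) 1, Φ t = P 1 := by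
        rw [hP]; simp only
        rw [intervalIntegral.integral_of_le (by norm_num), integral_Ioc_eq_integral_Ioo]
      have e3 : ∫ t, Φ t • (f t - c) = ∫ t in Ioo (-1:ℝ) 1, Φ t • (f t - c) := by
        symm
        apply setIntegral_eq_integral_of_forall_compl_eq_zero
        intro t ht
        rw [image_eq_zero_of_notMem_tsupport (fun h => ht (h3 h)), zero_smul]
      have e4 : ∫ t in Ioo (-1:ℝ) 1, Φ t • (f t - c) =
          (∫ t in Ioo (-1:ℝ) 1, f t * Φ t) - c * ∫ t in Ioo (-1:ℝ) 1, Φ t := by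
        rw [← integral_const_mul, ← integral_sub (hcont h1.continuous)
          ((h1.continuous.integrable_of_hasCompactSupport h2).integrableOn.const_mul c)]
        congr 1; ext t; simp only [smul_eq_mul]; ring
      rw [e3, e4, e2]
      linarith
    all_goals
      have hsup : Function.support (fun t => P t - P 1 * θ t) ⊆ Icc (min a a') (max b b') := by
        intro t ht
        by_contra hn
        apply ht
        rw [mem_Icc, not_and_or, not_le, not_le] at hn
        rcases hn with hn | hn
        · rw [lt_min_iff] at hn
          simp [lo t hn.2, θ0 t hn.1.le]
        · rw [max_lt_iff] at hn
          simp [hi t hn.2, θ1 t hn.1.le]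
    · exact HasCompactSupport.of_support_subset_isCompact isCompact_Icc hsup
    · refine (closure_minimal hsup isClosed_Icc).trans fun t ht => ⟨?_, ?_⟩
      · exact (lt_min hA hA').trans_le ht.1
      · exact ht.2.trans_lt (max_lt hB hB')

lemma eta2 (x : V2) : (![x 0, x 1] : V2) = x := by ext i; fin_cases i <;> rfl

lemma prim_smooth {Φ : V2 → ℝ} (hΦ : TestF Rect Φ) :
    ContDiff ℝ (⊤ : ℕ∞) (fun x : V2 => ∫ s in (0:ℝ)..x 0, Φ ![s, x 1]) := by
  have hcont : ∀ t : ℝ, Continuous (fun s => Φ ![s, t]) := fun t => (test_slice0 hΦ t).1.continuous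
  have hPhiInt : ∀ t : ℝ, Integrable (fun s => Φ ![s, t]) := fun t =>
    (hcont t).integrable_of_hasCompactSupport (test_slice0 hΦ t).2.1
  have hz : ∀ s t : ℝ, s ∉ Ioo (0:ℝ) 1 → Φ ![s, t] = 0 := fun s t hs =>
    image_eq_zero_of_notMem_tsupport fun h => hs (hΦ.2.2 h).1
  have key := contDiffOn_convolution_right_with_param_comp (𝕜 := ℝ) (μ := (volume : Measure ℝ))
    (n := (⊤ : ℕ∞)) (ContinuousLinearMap.mul ℝ ℝ)
    (s := (univ : Set V2)) (v := fun x : V2 => x 0) (f := (Ioi (0:ℝ)).indicator fun _ => (1:ℝ))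
    (g := fun (x : V2) s => Φ ![s, x 1]) (k := (fun x : V2 => x 0) '' tsupport Φ)
    ((contDiff_apply ℝ ℝ (0 : Fin 2)).contDiffOn) isOpen_univ
    (hΦ.2.1.image (continuous_apply 0))
    (by
      intro p s _ hs
      exact image_eq_zero_of_notMem_tsupport fun h => hs ⟨_, h, rfl⟩)
    (((continuous_const (y := (1:ℝ))).locallyIntegrable).indicator measurableSet_Ioi)
    (by
      apply ContDiff.contDiffOn
      refine hΦ.1.comp (g := Φ) (f := fun q : V2 × ℝ => (![q.2, q.1 1] : V2)) ?_
      rw [contDiff_pi]; intro i; fin_cases i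
      · exact contDiff_snd
      · exact (contDiff_apply ℝ ℝ (1 : Fin 2)).comp (f := fun q : V2 × ℝ => q.1) contDiff_fst)
  rw [contDiffOn_univ] at key
  convert key using 1
  ext x
  rw [convolution_eq_swap]
  have e : ∫ s in Iic (0:ℝ), Φ ![s, x 1] = 0 :=
    setIntegral_eq_zero_of_forall_eq_zero fun s hs => hz _ _ fun h => absurd h.1 (not_lt.2 hs)
  rw [← intervalIntegral.integral_Iic_sub_Iic (hPhiInt _).integrableOn (hPhiInt _).integrableOn, e, sub_zero,
    integral_Iic_eq_integral_Iio, ← integral_indicator measurableSet_Iio]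
  congr 1; ext s
  by_cases h : s < x 0 <;> simp [indicator, h]

/-- Functions with vanishing first distributional derivative. -/
lemma slice_const {v : V2 → ℝ} (hv : IntegrableOn v Rect)
    (H : ∀ φ, TestF Rect φ → ∫ x in Rect, v x * pd 0 φ x = 0) :
    ∃ w : ℝ → ℝ, IntegrableOn w (Ioo (-1:ℝ) 1) ∧
      ∀ᵐ x ∂(volume.restrict Rect), v x = w (x 1) := by
  obtain ⟨θ, ρ, hθ, hρ, hd, a, b, hA, hab, hB, θ0, θ1, ρ0⟩ := exists_theta (A := 0) (B := 1) (by norm_num)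
  obtain ⟨C, hC⟩ : ∃ C, ∀ t, ‖ρ t‖ ≤ C := by
    refine (HasCompactSupport.of_support_subset_isCompact (isCompact_Icc (a := a) (b := b))
      ?_).exists_bound_of_continuous hρ.continuous
    intro t ht; by_contra h; exact ht (ρ0 t h)
  have hvρ : IntegrableOn (fun x => v x * ρ (x 0)) Rect := by
    have := hv.bdd_mul (c := C) (f := fun x : V2 => ρ (x 0))
      (hρ.continuous.comp (f := fun x : V2 => x 0) (continuous_apply 0)).aestronglyMeasurable
      (Eventually.of_forall fun x => hC _)
    simpa [mul_comm, IntegrableOn] using this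
  have hvρ' := (rect_integrable _).1 hvρ
  set w : ℝ → ℝ := fun t => ∫ s in Ioo (0:ℝ) 1, v ![s, t] * ρ s with hw
  have wi : IntegrableOn w (Ioo (-1:ℝ) 1) := hvρ'.integral_prod_right
  have wR : IntegrableOn (fun x : V2 => w (x 1)) Rect := by
    simpa using rect_prod_integrable (k := fun _ => 1) continuous_const wi
  refine ⟨w, wi, ?_⟩
  have := rect_open.ae_eq_zero_of_integral_contDiff_smul_eq_zero (μ := (volume : Measure V2))
    (f := fun x => v x - w (x 1)) (IntegrableOn.locallyIntegrableOn (hv.sub wR)) ?_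
  · rw [ae_restrict_iff' rect_open.measurableSet]
    filter_upwards [this] with t h1 h2 using sub_eq_zero.1 (h1 h2)
  intro Φ h1 h2 h3
  have hΦ : TestF Rect Φ := ⟨h1, h2, h3⟩
  have hcont : ∀ t : ℝ, Continuous (fun s => Φ ![s, t]) := fun t => (test_slice0 hΦ t).1.continuous
  obtain ⟨a', b', hA', hB', hK⟩ := cpt_sub (h2.image (continuous_apply 0)) (A := 0) (B := 1) (by norm_num)
    (by rintro _ ⟨x, hx, rfl⟩; exact (h3 hx).1)
  obtain ⟨c', d', hC', hD', hK'⟩ := cpt_sub (h2.image (continuous_apply 1)) (A := -1) (B := 1) (by norm_num)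
    (by rintro _ ⟨x, hx, rfl⟩; exact (h3 hx).2)
  have Φ0 : ∀ s t, s ∉ Icc a' b' → Φ ![s, t] = 0 := fun s t ht =>
    image_eq_zero_of_notMem_tsupport fun h => ht (hK ⟨_, h, rfl⟩)
  have Φ1 : ∀ s t, t ∉ Icc c' d' → Φ ![s, t] = 0 := fun s t ht =>
    image_eq_zero_of_notMem_tsupport fun h => ht (hK' ⟨_, h, rfl⟩)
  set J : ℝ → ℝ := fun t => ∫ s in (0:ℝ)..1, Φ ![s, t] with hJ
  set φ : V2 → ℝ := fun x => (∫ s in (0:ℝ)..x 0, Φ ![s, x 1]) - θ (x 0) * J (x 1) with hφ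
  have Jc : ContDiff ℝ (⊤ : ℕ∞) (fun x : V2 => J (x 1)) := by
    refine (prim_smooth hΦ).comp (f := fun x : V2 => (![1, x 1] : V2)) ?_
    rw [contDiff_pi]; intro i; fin_cases i
    · exact contDiff_const
    · exact contDiff_apply ℝ ℝ (1 : Fin 2)
  have φc : ContDiff ℝ (⊤ : ℕ∞) φ :=
    (prim_smooth hΦ).sub ((hθ.comp (contDiff_apply ℝ ℝ (0 : Fin 2))).mul Jc)
  have pdφ : ∀ x, pd 0 φ x = Φ x - ρ (x 0) * J (x 1) := by
    intro x
    have h1' : HasDerivAt (fun s : ℝ => (![s, x 1] : V2)) (Pi.single 0 1) (x 0) := by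
      rw [hasDerivAt_pi]; intro i; fin_cases i
      · simpa using hasDerivAt_id' (x 0)
      · simpa using hasDerivAt_const (x 0) (x 1)
    have e1 := ((φc.differentiable (by simp)) ![x 0, x 1]).hasFDerivAt.comp_hasDerivAt (x 0) h1'
    have e2 : HasDerivAt (φ ∘ fun s : ℝ => (![s, x 1] : V2)) (Φ ![x 0, x 1] - ρ (x 0) * J (x 1)) (x 0) := by
      refine HasDerivAt.sub (f := fun s => ∫ r in (0:ℝ)..s, Φ ![r, x 1])
        (intervalIntegral.integral_hasDerivAt_right ((hcont _).intervalIntegrable _ _)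
        ((hcont _).stronglyMeasurableAtFilter _ _) (hcont _).continuousAt) ?_
      exact (hd (x 0)).mul_const (J (x 1))
    have := e1.unique e2
    rw [eta2] at this
    exact this
  have lo : ∀ s t, s < a' → ∫ r in (0:ℝ)..s, Φ ![r, t] = 0 := by
    intro s t hs
    apply intervalIntegral.integral_zero_ae
    refine Eventually.of_forall fun r hr => Φ0 r t fun h => ?_
    exact absurd (hr.2.trans_lt (max_lt hA' hs)) (not_lt.2 h.1)
  have hi : ∀ s t, b' < s → ∫ r in (0:ℝ)..s, Φ ![r, t] = J t := by
    intro s t hs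
    rw [← sub_eq_zero, hJ]
    simp only
    rw [intervalIntegral.integral_interval_sub_left ((hcont t).intervalIntegrable _ _)
      ((hcont t).intervalIntegrable _ _)]
    apply intervalIntegral.integral_zero_ae
    refine Eventually.of_forall fun r hr => Φ0 r t fun h => ?_
    exact absurd hr.1 (not_lt.2 (h.2.trans_lt (lt_min hB' hs)).le)
  have z1 : ∀ s t, t ∉ Icc c' d' → ∫ r in (0:ℝ)..s, Φ ![r, t] = 0 := by
    intro s t ht
    simp [Φ1 _ t ht]
  have hsup : Function.support φ ⊆ {x | x 0 ∈ Icc (min a a') (max b b') ∧ x 1 ∈ Icc c' d'} := by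
    intro x hx
    by_contra hn
    apply hx
    rw [mem_ofPred_eq, not_and_or] at hn
    rcases hn with hn | hn
    · rw [mem_Icc, not_and_or, not_le, not_le] at hn
      rcases hn with hn | hn
      · rw [lt_min_iff] at hn
        simp [hφ, lo _ _ hn.2, θ0 _ hn.1.le]
      · rw [max_lt_iff] at hn
        simp [hφ, hi _ _ hn.2, θ1 _ hn.1.le]
    · simp [hφ, hJ, z1 _ _ hn]
  have hcpt : IsCompact {x : V2 | x 0 ∈ Icc (min a a') (max b b') ∧ x 1 ∈ Icc c' d'} := by
    convert isCompact_Icc (a := (![min a a', c'] : V2)) (b := ![max b b', d']) using 1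
    ext x
    simp only [mem_ofPred_eq, mem_Icc, Pi.le_def, Fin.forall_fin_two]
    simp
    tauto
  have tφ : TestF Rect φ := by
    refine ⟨φc, HasCompactSupport.of_support_subset_isCompact hcpt hsup,
      (closure_minimal hsup hcpt.isClosed).trans fun x hx => ⟨⟨?_, ?_⟩, ?_, ?_⟩⟩
    · exact (lt_min hA hA').trans_le hx.1.1
    · exact hx.1.2.trans_lt (max_lt hB hB')
    · exact hC'.trans_le hx.2.1
    · exact hx.2.2.trans_lt hD'
  have key := H φ tφ
  simp_rw [pdφ] at key
  have Jcont : Continuous J := by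
    have := Jc.continuous.comp (g := fun x : V2 => J (x 1)) (f := fun t : ℝ => (![0, t] : V2)) (by fun_prop)
    exact this
  have iv : IntegrableOn (fun x => v x * Φ x) Rect := by
    simpa [mul_comm, IntegrableOn] using integrable_mul_test h1.continuous h2 hv
  have iw : IntegrableOn (fun x => w (x 1) * Φ x) Rect := by
    simpa [mul_comm, IntegrableOn] using integrable_mul_test h1.continuous h2 wR
  obtain ⟨D, hD⟩ := (isCompact_Icc (a := (-1:ℝ)) (b := 1)).exists_bound_of_continuousOn Jcont.continuousOn
  have iJ : IntegrableOn (fun x => v x * ρ (x 0) * J (x 1)) Rect := by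
    have := hvρ.bdd_mul (c := D) (f := fun x => J (x 1)) Jc.continuous.aestronglyMeasurable (by
      rw [ae_restrict_iff' rect_open.measurableSet]
      exact Eventually.of_forall fun x hx => hD _ (Ioo_subset_Icc_self hx.2))
    simpa [mul_comm, IntegrableOn] using this
  have e1 : ∫ x in Rect, v x * (Φ x - ρ (x 0) * J (x 1)) =
      (∫ x in Rect, v x * Φ x) - ∫ x in Rect, v x * ρ (x 0) * J (x 1) := by
    rw [← integral_sub iv iJ]; congr 1; ext x; ring
  have e2 : ∫ x in Rect, v x * ρ (x 0) * J (x 1) = ∫ x in Rect, w (x 1) * Φ x := by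
    rw [rect_integral, rect_integral, integral_prod_symm _ ((rect_integrable _).1 iJ),
      integral_prod_symm _ ((rect_integrable _).1 iw)]
    congr 1; ext t
    calc _ = w t * J t := by
          rw [hw]; simp only; rw [← integral_mul_const]; rfl
      _ = _ := by
          rw [hJ]; simp only
          rw [intervalIntegral.integral_of_le (by norm_num), integral_Ioc_eq_integral_Ioo,
            ← integral_const_mul]
          rfl
  have e3 : ∫ x, Φ x • (v x - w (x 1)) = ∫ x in Rect, Φ x • (v x - w (x 1)) := by
    symm
    apply setIntegral_eq_integral_of_forall_compl_eq_zero
    intro t ht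
    rw [image_eq_zero_of_notMem_tsupport (fun h => ht (h3 h)), zero_smul]
  have e4 : ∫ x in Rect, Φ x • (v x - w (x 1)) =
      (∫ x in Rect, v x * Φ x) - ∫ x in Rect, w (x 1) * Φ x := by
    rw [← integral_sub iv iw]; congr 1; ext x; simp only [smul_eq_mul]; ring
  rw [e3, e4, ← e2]
  linarith

lemma bv_sub {f g : ℝ → ℝ} (hf : BoundedVariationOn f (Ioo (-1:ℝ) 1))
    (hg : BoundedVariationOn g (Ioo (-1:ℝ) 1)) :
    BoundedVariationOn (fun t => f t - g t) (Ioo (-1:ℝ) 1) := by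
  have := bv_add hf ((bv_const (-1)).fun_mul hg)
  simpa [sub_eq_add_neg] using this

lemma cdf_bv {α : Type*} [MeasurableSpace α] (τ : Measure α) [IsFiniteMeasure τ] (p : α → ℝ)
    {h : α → ℝ} (hh : Integrable h τ) :
    BoundedVariationOn (fun t => ∫ x in {x | p x ≤ t}, h x ∂τ) (Ioo (-1:ℝ) 1) := by
  have key : ∀ k : α → ℝ, Integrable k τ → (∀ x, 0 ≤ k x) →
      BoundedVariationOn (fun t => ∫ x in {x | p x ≤ t}, k x ∂τ) (Ioo (-1:ℝ) 1) := by
    intro k hk h0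
    have m : Monotone (fun t => ∫ x in {x | p x ≤ t}, k x ∂τ) := fun s t hst =>
      setIntegral_mono_set hk.integrableOn (Eventually.of_forall h0)
        (LE.le.eventuallyLE fun x hx => le_trans hx hst)
    refine (m.monotoneOn _).boundedVariationOn (C := ∫ x, k x ∂τ) fun t _ => ?_
    rw [abs_of_nonneg (integral_nonneg h0)]
    exact setIntegral_le_integral hk (Eventually.of_forall h0)
  have := bv_sub (key (fun x => max (h x) 0) hh.pos_part fun x => le_max_right _ _)
    (key (fun x => max (-h x) 0) hh.neg_part fun x => le_max_right _ _)
  convert this using 1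
  ext t
  rw [← integral_sub hh.pos_part.integrableOn hh.neg_part.integrableOn]
  congr 1; ext x
  rcases le_total (h x) 0 with h' | h'
  · rw [max_eq_right h', max_eq_left (by linarith)]; ring
  · rw [max_eq_left h', max_eq_right (by linarith)]; ring

lemma comp_int {Ω : Set V2} {u : V2 → V2} (h : IntegrableOn u Ω) (i : Fin 2) :
    IntegrableOn (fun x => u x i) Ω :=
  (ContinuousLinearMap.proj (R := ℝ) (φ := fun _ : Fin 2 => ℝ) i).integrable_comp h

lemma tensor_test {ρ η η' : ℝ → ℝ} (hρ : ContDiff ℝ (⊤ : ℕ∞) ρ) {a b : ℝ} (ha : 0 < a) (hb : b < 1)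
    (ρ0 : ∀ t, t ∉ Icc a b → ρ t = 0) (h1 : ContDiff ℝ (⊤ : ℕ∞) η) (h2 : HasCompactSupport η)
    (h3 : tsupport η ⊆ Ioo (-1:ℝ) 1) (h4 : ∀ t, HasDerivAt η (η' t) t) :
    TestF Rect (fun x => ρ (x 0) * η (x 1)) ∧
      ∀ x, pd 1 (fun x => ρ (x 0) * η (x 1)) x = ρ (x 0) * η' (x 1) := by
  have hc : ContDiff ℝ (⊤ : ℕ∞) (fun x : V2 => ρ (x 0) * η (x 1)) :=
    (hρ.comp (contDiff_apply ℝ ℝ (0 : Fin 2))).mul (h1.comp (contDiff_apply ℝ ℝ (1 : Fin 2)))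
  refine ⟨?_, ?_⟩
  · obtain ⟨c, d, hC, hD, hK⟩ := cpt_sub h2 (by norm_num) h3
    have hsup : Function.support (fun x : V2 => ρ (x 0) * η (x 1)) ⊆
        {x | x 0 ∈ Icc a b ∧ x 1 ∈ Icc c d} := by
      intro x hx
      rw [Function.mem_support, mul_ne_zero_iff] at hx
      exact ⟨by by_contra h; exact hx.1 (ρ0 _ h), hK (subset_tsupport _ hx.2)⟩
    have hcpt : IsCompact {x : V2 | x 0 ∈ Icc a b ∧ x 1 ∈ Icc c d} := by
      convert isCompact_Icc (a := (![a, c] : V2)) (b := ![b, d]) using 1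
      ext x
      simp only [mem_ofPred_eq, mem_Icc, Pi.le_def, Fin.forall_fin_two]
      simp
      tauto
    refine ⟨hc, HasCompactSupport.of_support_subset_isCompact hcpt hsup,
      (closure_minimal hsup hcpt.isClosed).trans fun x hx => ⟨⟨?_, ?_⟩, ?_, ?_⟩⟩
    · exact ha.trans_le hx.1.1
    · exact hx.1.2.trans_lt hb
    · exact hC.trans_le hx.2.1
    · exact hx.2.2.trans_lt hD
  · intro x
    have h1' : HasDerivAt (fun s : ℝ => (![x 0, s] : V2)) (Pi.single 1 1) (x 1) := by
      rw [hasDerivAt_pi]; intro i; fin_cases i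
      · simpa using hasDerivAt_const (x 1) (x 0)
      · simpa using hasDerivAt_id' (x 1)
    have e1 := ((hc.differentiable (by simp)) ![x 0, x 1]).hasFDerivAt.comp_hasDerivAt (x 1) h1'
    have e2 : HasDerivAt ((fun x : V2 => ρ (x 0) * η (x 1)) ∘ fun s : ℝ => (![x 0, s] : V2))
        (ρ (x 0) * η' (x 1)) (x 1) := (h4 (x 1)).const_mul (ρ (x 0))
    have := e1.unique e2
    rw [eta2] at this
    exact this

/-- Reconstruction of the map from its first derivative. -/
lemma bvrep {u : V2 → V2} {gu : V2 → Mat2} {σ : Measure V2} {gs : V2 → Mat2}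
    (h : HasBVDerivOn Rect u gu σ gs) (i : Fin 2) {a : ℝ → ℝ}
    (ha : BoundedVariationOn a (Ioo (-1:ℝ) 1))
    (hg : ∀ᵐ x ∂(volume.restrict Rect), gu x i 0 = a (x 1))
    (hs : ∀ᵐ x ∂σ, gs x i 0 = 0) :
    ∃ b : ℝ → ℝ, BoundedVariationOn b (Ioo (-1:ℝ) 1) ∧
      ∀ᵐ x ∂(volume.restrict Rect), u x i = x 0 * a (x 1) + b (x 1) := by
  have fin : IsFiniteMeasure σ := ⟨h.fin.lt_top⟩
  have finR : IsFiniteMeasure ((volume : Measure V2).restrict Rect) := by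
    rw [rect_map]; infer_instance
  have A := bv_intOn ha
  have ui := comp_int h.int_u i
  have xa : IntegrableOn (fun x : V2 => x 0 * a (x 1)) Rect :=
    rect_prod_integrable (k := fun s => s) continuous_id' A
  obtain ⟨w, wi, hw⟩ := slice_const (v := fun x => u x i - x 0 * a (x 1)) (ui.sub xa) (by
    intro φ hφ
    have e := h.ibp φ hφ.1 hφ.2.1 hφ.2.2 i 0
    have e1 : ∫ x, φ x * gs x i 0 ∂σ = 0 := by
      rw [integral_congr_ae (g := fun _ => 0)]
      · simp
      · filter_upwards [hs] with x hx; simp [hx]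
    have e2 : ∫ x in Rect, φ x * gu x i 0 = ∫ x in Rect, φ x * (1 * a (x 1)) := by
      apply integral_congr_ae
      filter_upwards [hg] with x hx; rw [hx, one_mul]
    have e3 := ibp_k (fun s => hasDerivAt_id' s) continuous_const A hφ
    have e4 : ∫ x in Rect, (u x i - x 0 * a (x 1)) * pd 0 φ x =
        (∫ x in Rect, u x i * pd 0 φ x) - ∫ x in Rect, x 0 * a (x 1) * pd 0 φ x := by
      rw [← integral_sub]
      · congr 1; ext x; ring
      · simp_rw [mul_comm _ (pd 0 φ _)]
        exact integrable_mul_test (test_pd hφ 0).1 (test_pd hφ 0).2.1 ui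
      · simp_rw [mul_comm _ (pd 0 φ _)]
        exact integrable_mul_test (test_pd hφ 0).1 (test_pd hφ 0).2.1 xa
    rw [e4, e, e1, e2, e3]; ring)
  obtain ⟨θ, ρ, hθ, hρ, hd, p, q, hA, hab, hB, θ0, θ1, ρ0⟩ := exists_theta (A := 0) (B := 1) (by norm_num)
  obtain ⟨C, hC⟩ : ∃ C, ∀ t, ‖ρ t‖ ≤ C := by
    refine (HasCompactSupport.of_support_subset_isCompact (isCompact_Icc (a := p) (b := q))
      ?_).exists_bound_of_continuous hρ.continuous
    intro t ht; by_contra h; exact ht (ρ0 t h)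
  have ρ2 : Continuous (fun x : V2 => ρ (x 0)) := hρ.continuous.comp (continuous_apply 0)
  have ρ1 : ∫ s in Ioo (0:ℝ) 1, ρ s = 1 := by
    rw [← integral_Ioc_eq_integral_Ioo, ← intervalIntegral.integral_of_le (by norm_num),
      intervalIntegral.integral_eq_sub_of_hasDerivAt (fun s _ => hd s)
        (hρ.continuous.intervalIntegrable _ _), θ1 1 hB.le, θ0 0 hA.le, sub_zero]
  set c := ∫ s in Ioo (0:ℝ) 1, s * ρ s with hc
  have g1 : Integrable (fun x => ρ (x 0) * gu x i 1) (volume.restrict Rect) :=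
    (h.int_gu i 1).bdd_mul (c := C) ρ2.aestronglyMeasurable (Eventually.of_forall fun x => hC _)
  have g2 : Integrable (fun x => ρ (x 0) * gs x i 1) σ :=
    (gs_int h i 1).bdd_mul (c := C) ρ2.aestronglyMeasurable (Eventually.of_forall fun x => hC _)
  set F1 : ℝ → ℝ := fun t => ∫ x in {x : V2 | x 1 ≤ t}, ρ (x 0) * gu x i 1 ∂(volume.restrict Rect) with hF1
  set F2 : ℝ → ℝ := fun t => ∫ x in {x : V2 | x 1 ≤ t}, ρ (x 0) * gs x i 1 ∂σ with hF2
  have b1 : BoundedVariationOn F1 (Ioo (-1:ℝ) 1) := cdf_bv _ (fun x : V2 => x 1) g1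
  have b2 : BoundedVariationOn F2 (Ioo (-1:ℝ) 1) := cdf_bv _ (fun x : V2 => x 1) g2
  have bF := bv_add b1 b2
  have hcont : ∀ {f : ℝ → ℝ}, IntegrableOn f (Ioo (-1:ℝ) 1) → ∀ {k : ℝ → ℝ}, Continuous k →
      Integrable (fun t => f t * k t) I1 := by
    intro f hf k hk
    obtain ⟨C, hC⟩ := (isCompact_Icc (a := (-1:ℝ)) (b := 1)).exists_bound_of_continuousOn hk.continuousOn
    have := hf.bdd_mul (c := C) hk.aestronglyMeasurable (by
      rw [ae_restrict_iff' measurableSet_Ioo]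
      exact Eventually.of_forall fun x hx => hC x (Ioo_subset_Icc_self hx))
    simpa [mul_comm] using this
  obtain ⟨K, hK⟩ := dbr1 (f := fun t => c * a t + w t - (F1 t + F2 t))
    (((A.const_mul c).add wi).sub (bv_intOn bF)) (by
    intro η η' h1 h2 h3 h4 h5
    obtain ⟨tT, tp⟩ := tensor_test hρ hA hB ρ0 h1 h2 h3 h4
    have e := h.ibp _ tT.1 tT.2.1 tT.2.2 i 1
    simp_rw [tp] at e
    have dη : deriv η = η' := funext fun t => (h4 t).deriv
    have h1' : ContDiff ℝ 1 η := h1.of_le (by exact_mod_cast le_top)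
    have q1 := ibp_cdf (volume.restrict Rect) (p := fun x : V2 => x 1) (measurable_pi_apply 1) g1 h1' h2
    have q2 := ibp_cdf σ (p := fun x : V2 => x 1) (measurable_pi_apply 1) g2 h1' h2
    rw [dη] at q1 q2
    have loc : ∀ f : ℝ → ℝ, ∫ t in Ioo (-1:ℝ) 1, f t * η' t = ∫ t, f t * η' t := by
      intro f
      apply setIntegral_eq_integral_of_forall_compl_eq_zero
      intro t ht
      rw [← dη, image_eq_zero_of_notMem_tsupport (fun h => ht (h3 (tsupport_deriv_subset h))), mul_zero]
    have r1 : ∫ x in Rect, ρ (x 0) * η (x 1) * gu x i 1 = ∫ x in Rect, η (x 1) * (ρ (x 0) * gu x i 1) := by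
      congr 1; ext x; ring
    have r2 : ∫ x, ρ (x 0) * η (x 1) * gs x i 1 ∂σ = ∫ x, η (x 1) * (ρ (x 0) * gs x i 1) ∂σ := by
      congr 1; ext x; ring
    have s1 : ∫ x in Rect, u x i * (ρ (x 0) * η' (x 1)) =
        (∫ x in Rect, x 0 * ρ (x 0) * (a (x 1) * η' (x 1))) + ∫ x in Rect, ρ (x 0) * (w (x 1) * η' (x 1)) := by
      rw [← integral_add]
      · apply integral_congr_ae
        filter_upwards [hw] with x hx
        have : u x i = x 0 * a (x 1) + w (x 1) := by linarith
        rw [this]; ring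
      · exact rect_prod_integrable (k := fun s => s * ρ s) (continuous_id'.mul hρ.continuous) (hcont A h5)
      · exact rect_prod_integrable (k := ρ) hρ.continuous (hcont wi h5)
    have s2 : ∫ x in Rect, x 0 * ρ (x 0) * (a (x 1) * η' (x 1)) = c * ∫ t in Ioo (-1:ℝ) 1, a t * η' t := by
      rw [rect_integral]
      exact integral_prod_mul (fun s => s * ρ s) (fun t => a t * η' t)
    have s3 : ∫ x in Rect, ρ (x 0) * (w (x 1) * η' (x 1)) = ∫ t in Ioo (-1:ℝ) 1, w t * η' t := by
      rw [rect_integral]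
      have := integral_prod_mul (μ := I0) (ν := I1) ρ (fun t => w t * η' t)
      rw [ρ1, one_mul] at this
      exact this
    have s4 : ∫ t in Ioo (-1:ℝ) 1, (c * a t + w t - (F1 t + F2 t)) * η' t =
        (c * ∫ t in Ioo (-1:ℝ) 1, a t * η' t) + (∫ t in Ioo (-1:ℝ) 1, w t * η' t)
          - ((∫ t in Ioo (-1:ℝ) 1, F1 t * η' t) + ∫ t in Ioo (-1:ℝ) 1, F2 t * η' t) := by
      have j1 := hcont A h5
      have j2 := hcont wi h5
      have j3 := hcont (bv_intOn b1) h5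
      have j4 := hcont (bv_intOn b2) h5
      rw [← integral_const_mul, ← integral_add (j1.const_mul c) j2, ← integral_add j3 j4,
        ← integral_sub]
      · congr 1; ext t; ring
      · exact (j1.const_mul c).add j2
      · exact j3.add j4
    rw [s4, loc F1, loc F2, q1, q2, ← r1, ← r2, ← s2, ← s3, ← s1, e]
    ring)
  refine ⟨fun t => F1 t + F2 t + K - c * a t, bv_sub (bv_add bF (bv_const K)) ((bv_const c).fun_mul ha), ?_⟩
  filter_upwards [hw, rect_ae_snd hK] with x h1 h2
  linarith

lemma so2_facts {M : Mat2} (h : M ∈ SO2) :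
    M 1 1 = M 0 0 ∧ M 0 1 = - M 1 0 ∧ M 0 0 * M 0 0 + M 1 0 * M 1 0 = 1 := by
  obtain ⟨h1, h2⟩ := h
  rw [Matrix.det_fin_two] at h2
  have e00 := congrFun (congrFun h1 0) 0
  have e01 := congrFun (congrFun h1 0) 1
  have e11 := congrFun (congrFun h1 1) 1
  simp [Matrix.mul_apply, Fin.sum_univ_two, Matrix.transpose_apply] at e00 e01 e11
  have k1 : M 1 1 = M 0 0 := by
    linear_combination M 0 0 * h2 - M 1 1 * e00 + M 0 1 * e01
  have k2 : M 0 1 = - M 1 0 := by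
    linear_combination -M 0 1 * h2 + M 1 0 * e11 * 0 + (-(M 1 0)) * e00 + M 0 0 * e01
  refine ⟨k1, k2, ?_⟩
  rw [k1, k2] at h2
  linarith

lemma proj_lip {ι : Type*} [Fintype ι] (i : ι) :
    ∃ K, LipschitzWith K (fun v : EuclideanSpace ℝ ι => v i) :=
  ⟨_, (EuclideanSpace.proj i : EuclideanSpace ℝ ι →L[ℝ] ℝ).lipschitz⟩

lemma bv_comp_proj {ι : Type*} [Fintype ι] {f : ℝ → EuclideanSpace ℝ ι} {s : Set ℝ}
    (h : BoundedVariationOn f s) (i : ι) :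
    BoundedVariationOn ((fun v : EuclideanSpace ℝ ι => v i) ∘ f) s := by
  obtain ⟨K, hK⟩ := proj_lip i
  exact hK.comp_boundedVariationOn h

lemma bvm_comp {R : ℝ → Mat2} (h : BVm R (Ioo (-1:ℝ) 1)) (i j : Fin 2) :
    BoundedVariationOn (fun t => R t i j) (Ioo (-1:ℝ) 1) := by
  have e : (fun t => R t i j) = (fun v : EuclideanSpace ℝ (Fin 2 × Fin 2) => v (i, j)) ∘ fun t => mToE (R t) := by
    funext t; simp [mToE]
  rw [e]
  exact bv_comp_proj (f := fun t => mToE (R t)) h _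

lemma bvv_comp {ψ : ℝ → V2} (h : BVv ψ (Ioo (-1:ℝ) 1)) (i : Fin 2) :
    BoundedVariationOn (fun t => ψ t i) (Ioo (-1:ℝ) 1) := by
  have e : (fun t => ψ t i) = (fun v : EuclideanSpace ℝ (Fin 2) => v i) ∘ fun t => vToE (ψ t) := by
    funext t; simp [vToE]
  rw [e]
  exact bv_comp_proj (f := fun t => vToE (ψ t)) h _

lemma bvv_of_comp {ψ : ℝ → V2} (h : ∀ i, BoundedVariationOn (fun t => ψ t i) (Ioo (-1:ℝ) 1)) :
    BVv ψ (Ioo (-1:ℝ) 1) := by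
  have k : ∀ i, ∀ v : EuclideanSpace ℝ (Fin 2),
      BoundedVariationOn (fun t => ψ t i • v) (Ioo (-1:ℝ) 1) := fun i v =>
    (ContinuousLinearMap.toSpanSingleton ℝ v).lipschitz.comp_boundedVariationOn (h i)
  have := bv_add (k 0 (vToE ![1, 0])) (k 1 (vToE ![0, 1]))
  unfold BVv
  have e : (fun t => vToE (ψ t)) = fun t => ψ t 0 • vToE ![1, 0] + ψ t 1 • vToE ![0, 1] := by
    funext t
    ext i
    fin_cases i <;> simp [vToE]
  rw [e]
  exact this

lemma mulVec_e1 (M : Mat2) (i : Fin 2) : M.mulVec e1 i = M i 0 := by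
  simp [Matrix.mulVec, dotProduct, Fin.sum_univ_two, e1]

lemma mulVec_e2 (M : Mat2) (i : Fin 2) : M.mulVec e2 i = M i 1 := by
  simp [Matrix.mulVec, dotProduct, Fin.sum_univ_two, e2]

lemma mulVec_i (M : Mat2) (x : V2) (i : Fin 2) : M.mulVec x i = M i 0 * x 0 + M i 1 * x 1 := by
  simp [Matrix.mulVec, dotProduct, Fin.sum_univ_two]

lemma shear (M : Mat2) (γ : ℝ) (i : Fin 2) :
    (M * (1 + γ • outer e1 e2)) i 0 = M i 0 ∧ (M * (1 + γ • outer e1 e2)) i 1 = M i 1 + γ * M i 0 := by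
  constructor <;> simp [Matrix.mul_apply, Fin.sum_univ_two, outer, e1, e2] <;> ring

lemma gradForm {u : V2 → V2} {gu : V2 → Mat2} {σ : Measure V2} {gs : V2 → Mat2}
    (h : HasBVDerivOn Rect u gu σ gs) {R : ℝ → Mat2} {ψ : ℝ → V2}
    (hR : BVm R (Ioo (-1) 1)) (hψ : BVv ψ (Ioo (-1) 1))
    (hu : ∀ᵐ x ∂(volume.restrict Rect), u x = (R (x 1)).mulVec x + ψ (x 1)) (i : Fin 2) :
    (∀ᵐ x ∂(volume.restrict Rect), gu x i 0 = R (x 1) i 0 ∧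
      gu x i 1 = x 0 * mDeriv R (x 1) i 0 +
        (R (x 1) i 1 + x 1 * mDeriv R (x 1) i 1 + vecDeriv ψ (x 1) i)) ∧
    ∀ᵐ x ∂σ, gs x i 0 = 0 := by
  have hb := bv_add (bv_id.fun_mul (bvm_comp hR i 1)) (bvv_comp hψ i)
  obtain ⟨k1, k2, k3⟩ := gradId h i (bvm_comp hR i 0) hb (by
    filter_upwards [hu] with x hx
    rw [hx, Pi.add_apply, mulVec_i]; ring)
  refine ⟨?_, k3⟩
  have d1 := (bv2 (bvm_comp hR i 1) (k := fun _ => 0) continuous_const).1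
  have d2 := (bv2 (bvv_comp hψ i) (k := fun _ => 0) continuous_const).1
  filter_upwards [k1, k2, rect_ae_snd d1, rect_ae_snd d2] with x h1 h2 h3 h4
  refine ⟨h1, ?_⟩
  have e : HasDerivAt (fun t => t * R t i 1 + ψ t i) _ (x 1) :=
    ((hasDerivAt_id' (x 1)).mul h3.hasDerivAt).add h4.hasDerivAt
  rw [h2, e.deriv]
  simp [mDeriv, vecDeriv]

lemma ae_affine {α β : ℝ → ℝ} (h : ∀ᵐ x ∂((volume : Measure V2).restrict Rect), x 0 * α (x 1) + β (x 1) = 0) :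
    ∀ᵐ t ∂I1, α t = 0 ∧ β t = 0 := by
  rw [rect_ae] at h
  have h' : ∀ᵐ p ∂(I1.prod I0), p.2 * α p.1 + β p.1 = 0 :=
    (Measure.measurePreserving_swap (μ := I1) (ν := I0)).quasiMeasurePreserving.ae h
  have h2 := Measure.ae_ae_of_ae_prod h'
  have nb : (ae I0).NeBot := by
    rw [ae_neBot, Ne, Measure.restrict_eq_zero]; simp
  filter_upwards [h2] with t ht
  obtain ⟨s, hs⟩ := ht.exists
  have hne : ∀ᵐ r ∂I0, r ≠ s :=
    ae_restrict_of_ae (compl_mem_ae_iff.2 (measure_singleton s))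
  obtain ⟨r, hr, hrs⟩ := (ht.and hne).exists
  have hs : s * α t + β t = 0 := hs
  have hr : r * α t + β t = 0 := hr
  have : (r - s) * α t = 0 := by linear_combination hr - hs
  have a0 := (mul_eq_zero.1 this).resolve_left (sub_ne_zero.2 hrs)
  exact ⟨a0, by rw [a0] at hs; simpa using hs⟩

/-- Relations between the derivatives of the entries of a rotation-valued map. -/
lemma rot_deriv {R : ℝ → Mat2} (hS : ∀ t ∈ Ioo (-1:ℝ) 1, R t ∈ SO2) (hR : BVm R (Ioo (-1) 1)) :
    ∀ᵐ t ∂I1, t ∈ Ioo (-1:ℝ) 1 ∧ mDeriv R t 1 1 = mDeriv R t 0 0 ∧ mDeriv R t 0 1 = - mDeriv R t 1 0 ∧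
      R t 0 0 * mDeriv R t 0 0 + R t 1 0 * mDeriv R t 1 0 = 0 := by
  have d1 := (bv2 (bvm_comp hR 0 0) (k := fun _ => 0) continuous_const).1
  have d2 := (bv2 (bvm_comp hR 1 0) (k := fun _ => 0) continuous_const).1
  filter_upwards [d1, d2, ae_restrict_mem measurableSet_Ioo] with t h1 h2 ht
  have ev : ∀ᶠ r in 𝓝 t, r ∈ Ioo (-1:ℝ) 1 := isOpen_Ioo.mem_nhds ht
  refine ⟨ht, ?_, ?_, ?_⟩
  · exact Filter.EventuallyEq.deriv_eq (ev.mono fun r hr => (so2_facts (hS r hr)).1)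
  · show deriv (fun s => R s 0 1) t = - deriv (fun s => R s 1 0) t
    rw [← deriv.fun_neg]
    exact Filter.EventuallyEq.deriv_eq (ev.mono fun r hr => (so2_facts (hS r hr)).2.1)
  · have e1 := ((h1.hasDerivAt.mul h1.hasDerivAt).add (h2.hasDerivAt.mul h2.hasDerivAt)).deriv
    have e2 : deriv (((fun t => R t 0 0) * fun t => R t 0 0) + ((fun t => R t 1 0) * fun t => R t 1 0)) t
        = 0 := by
      refine (Filter.EventuallyEq.deriv_eq (f := fun _ => (1:ℝ))
        (ev.mono fun r hr => (so2_facts (hS r hr)).2.2)).trans ?_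
      simp
    rw [e2] at e1
    simp only [mDeriv, Matrix.of_apply]
    linarith

lemma der_zero {u : V2 → V2} {gu : V2 → Mat2} {σ : Measure V2} {gs : V2 → Mat2}
    (h : HasBVDerivOn Rect u gu σ gs) {R : ℝ → Mat2} {ψ : ℝ → V2}
    (hS : ∀ t ∈ Ioo (-1:ℝ) 1, R t ∈ SO2)
    (hR : BVm R (Ioo (-1) 1)) (hψ : BVv ψ (Ioo (-1) 1))
    (hu : ∀ᵐ x ∂(volume.restrict Rect), u x = (R (x 1)).mulVec x + ψ (x 1))
    (hdet : ∀ᵐ x ∂(volume.restrict Rect), (gu x).det = 1) :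
    ∀ᵐ t ∂(volume.restrict (Ioo (-1:ℝ) 1)),
      dot (vecDeriv ψ t) ((R t).mulVec e2) = 0 ∧ mDeriv R t = 0 := by
  have rd := rot_deriv hS hR
  have aff := ae_affine (α := fun t => R t 0 0 * mDeriv R t 1 0 - R t 1 0 * mDeriv R t 0 0)
    (β := fun t => R t 0 0 * vecDeriv ψ t 1 - R t 1 0 * vecDeriv ψ t 0) (by
      filter_upwards [hdet, (gradForm h hR hψ hu 0).1, (gradForm h hR hψ hu 1).1, rect_ae_snd rd]
        with x d g0 g1 ⟨hx, r1, r2, r3⟩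
      obtain ⟨s1, s2, s3⟩ := so2_facts (hS _ hx)
      rw [Matrix.det_fin_two, g0.1, g0.2, g1.1, g1.2, r1, r2, s1, s2] at d
      linear_combination d - s3 - x 1 * r3)
  filter_upwards [rd, aff] with t ⟨ht, r1, r2, r3⟩ ⟨a0, b0⟩
  obtain ⟨s1, s2, s3⟩ := so2_facts (hS _ ht)
  refine ⟨?_, ?_⟩
  · simp only [dot, Fin.sum_univ_two, mulVec_e2, s1, s2]
    linear_combination b0
  · have c0 : mDeriv R t 0 0 = 0 := by
      linear_combination (-mDeriv R t 0 0) * s3 + R t 0 0 * r3 - R t 1 0 * a0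
    have c1 : mDeriv R t 1 0 = 0 := by
      linear_combination (-mDeriv R t 1 0) * s3 + R t 1 0 * r3 + R t 0 0 * a0
    ext i j
    fin_cases i <;> fin_cases j <;> simp [c0, c1, r1, r2]

lemma gamma_int {R : ℝ → Mat2} {ψ : ℝ → V2} (hS : ∀ t ∈ Ioo (-1:ℝ) 1, R t ∈ SO2)
    (hR : BVm R (Ioo (-1) 1)) (hψ : BVv ψ (Ioo (-1) 1)) :
    IntegrableOn (fun t => dot (vecDeriv ψ t) ((R t).mulVec e1)) (Ioo (-1:ℝ) 1) := by
  have k : ∀ i, IntegrableOn (fun t => R t i 0 * vecDeriv ψ t i) (Ioo (-1:ℝ) 1) := by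
    intro i
    refine Integrable.bdd_mul (c := 1) (bv2 (bvv_comp hψ i) (k := fun _ => 0) continuous_const).2.1
      (bv_intOn (bvm_comp hR i 0)).aestronglyMeasurable ?_
    filter_upwards [ae_restrict_mem measurableSet_Ioo] with t ht
    obtain ⟨s1, s2, s3⟩ := so2_facts (hS _ ht)
    rw [Real.norm_eq_abs, ← sq_le_one_iff_abs_le_one]
    fin_cases i
    · show R t 0 0 ^ 2 ≤ 1
      nlinarith [sq_nonneg (R t 0 0), sq_nonneg (R t 1 0)]
    · show R t 1 0 ^ 2 ≤ 1
      nlinarith [sq_nonneg (R t 0 0), sq_nonneg (R t 1 0)]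
  refine ((k 0).add (k 1)).congr (Eventually.of_forall fun t => ?_)
  simp only [dot, Fin.sum_univ_two, mulVec_e1, Pi.add_apply]; ring

/-- Proposition 4.1: two alternative representations of `A` on
`Ω = (0,1) × (−1,1)`: (1) `A` consists of the `BV` maps with
`∇u(x) = R(x₂)(I + γ(x₂) e₁⊗e₂)` a.e., `R ∈ BV(−1,1;SO(2))`, `γ ∈ L¹(−1,1)` and
`(D^s u) e₁ = 0`; (2) `A` consists of the maps `u(x) = R(x₂)x + ψ(x₂)` with
`R ∈ BV(−1,1;SO(2))`, `ψ ∈ BV(−1,1;ℝ²)`, `ψ'·Re₂ = 0` and `R' = 0` a.e. in `(−1,1)`. -/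
theorem charA_Rect :
    ∀ u : V2 → V2,
      (memAOn Rect (-1) 1 u ↔
        (∃ gu σ gs, HasBVDerivOn Rect u gu σ gs ∧
          ∃ R : ℝ → Mat2, ∃ γ : ℝ → ℝ,
            (∀ t ∈ Ioo (-1:ℝ) 1, R t ∈ SO2) ∧ BVm R (Ioo (-1) 1) ∧
            IntegrableOn γ (Ioo (-1:ℝ) 1) volume ∧
            (∀ᵐ x ∂(volume.restrict Rect),
              gu x = R (x 1) * (1 + γ (x 1) • outer e1 e2)) ∧
            (∀ᵐ x ∂σ, (gs x).mulVec e1 = 0))) ∧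
      (memAOn Rect (-1) 1 u ↔
        (∃ gu σ gs, HasBVDerivOn Rect u gu σ gs ∧
          ∃ R : ℝ → Mat2, ∃ ψ : ℝ → V2,
            (∀ t ∈ Ioo (-1:ℝ) 1, R t ∈ SO2) ∧ BVm R (Ioo (-1) 1) ∧ BVv ψ (Ioo (-1) 1) ∧
            (∀ᵐ x ∂(volume.restrict Rect), u x = (R (x 1)).mulVec x + ψ (x 1)) ∧
            (∀ᵐ t ∂(volume.restrict (Ioo (-1:ℝ) 1)),
              dot (vecDeriv ψ t) ((R t).mulVec e2) = 0 ∧ mDeriv R t = 0))) := by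
  intro u
  refine ⟨⟨?_, ?_⟩, ⟨?_, ?_⟩⟩
  · rintro ⟨gu, σ, gs, h, ⟨R, ψ, hS, hR, hψ, hu⟩, hdet⟩
    have dz := der_zero h hS hR hψ hu hdet
    refine ⟨gu, σ, gs, h, R, fun t => dot (vecDeriv ψ t) ((R t).mulVec e1), hS, hR,
      gamma_int hS hR hψ, ?_, ?_⟩
    · filter_upwards [(gradForm h hR hψ hu 0).1, (gradForm h hR hψ hu 1).1, rect_ae_snd dz,
        ae_restrict_mem rect_open.measurableSet] with x g0 g1 ⟨z1, z2⟩ hx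
      obtain ⟨s1, s2, s3⟩ := so2_facts (hS _ hx.2)
      simp only [dot, Fin.sum_univ_two, mulVec_e2, s1, s2] at z1
      rw [z2] at g0 g1
      simp only [Matrix.zero_apply] at g0 g1
      ext i j
      fin_cases i <;> fin_cases j
      · exact g0.1.trans (shear _ _ 0).1.symm
      · refine g0.2.trans (Eq.trans ?_ (shear _ _ 0).2.symm)
        simp only [dot, Fin.sum_univ_two, mulVec_e1]
        linear_combination (-vecDeriv ψ (x 1) 0) * s3 - R (x 1) 1 0 * z1
      · exact g1.1.trans (shear _ _ 1).1.symm
      · refine g1.2.trans (Eq.trans ?_ (shear _ _ 1).2.symm)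
        simp only [dot, Fin.sum_univ_two, mulVec_e1]
        linear_combination (-vecDeriv ψ (x 1) 1) * s3 + R (x 1) 0 0 * z1
    · filter_upwards [(gradForm h hR hψ hu 0).2, (gradForm h hR hψ hu 1).2] with x h0 h1
      ext i
      rw [mulVec_e1]
      fin_cases i
      · exact h0
      · exact h1
  · rintro ⟨gu, σ, gs, h, R, γ, hS, hR, hγ, hg, hs⟩
    have hb : ∀ i, ∃ b : ℝ → ℝ, BoundedVariationOn b (Ioo (-1:ℝ) 1) ∧
        ∀ᵐ x ∂(volume.restrict Rect), u x i = x 0 * R (x 1) i 0 + b (x 1) := fun i =>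
      bvrep h i (bvm_comp hR i 0)
        (hg.mono fun x hx => by rw [hx]; exact (shear _ _ i).1)
        (hs.mono fun x hx => (mulVec_e1 (gs x) i).symm.trans (congrFun hx i))
    choose b bb hb using hb
    refine ⟨gu, σ, gs, h, ⟨R, fun t i => b i t - t * R t i 1, hS, hR,
      bvv_of_comp fun i => bv_sub (bb i) (bv_id.fun_mul (bvm_comp hR i 1)), ?_⟩, ?_⟩
    · filter_upwards [hb 0, hb 1] with x h0 h1
      ext i
      rw [Pi.add_apply, mulVec_i]
      fin_cases i
      · simp only [Fin.zero_eta]; rw [h0]; ring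
      · simp only [Fin.mk_one]; rw [h1]; ring
    · filter_upwards [hg, ae_restrict_mem rect_open.measurableSet] with x hx hm
      rw [hx, Matrix.det_fin_two, (shear _ _ 0).1, (shear _ _ 0).2, (shear _ _ 1).1, (shear _ _ 1).2]
      have := (hS _ hm.2).2
      rw [Matrix.det_fin_two] at this
      linear_combination this
  · rintro ⟨gu, σ, gs, h, ⟨R, ψ, hS, hR, hψ, hu⟩, hdet⟩
    exact ⟨gu, σ, gs, h, R, ψ, hS, hR, hψ, hu, der_zero h hS hR hψ hu hdet⟩
  · rintro ⟨gu, σ, gs, h, R, ψ, hS, hR, hψ, hu, dz⟩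
    refine ⟨gu, σ, gs, h, ⟨R, ψ, hS, hR, hψ, hu⟩, ?_⟩
    filter_upwards [(gradForm h hR hψ hu 0).1, (gradForm h hR hψ hu 1).1, rect_ae_snd dz,
      ae_restrict_mem rect_open.measurableSet] with x g0 g1 ⟨z1, z2⟩ hx
    obtain ⟨s1, s2, s3⟩ := so2_facts (hS _ hx.2)
    simp only [dot, Fin.sum_univ_two, mulVec_e2, s1, s2] at z1
    rw [z2] at g0 g1
    simp only [Matrix.zero_apply] at g0 g1
    rw [Matrix.det_fin_two, g0.1, g0.2, g1.1, g1.2, s1, s2]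
    linear_combination s3 + z1

end
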